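/- arXiv:2208.13308 — 2 statements merged into one kernel-verified Lean document; each statement's English description precedes it below -/
import Mathlib

section
/- Let n ≥ 1, let f ∈ Q₀ⁿ, and suppose there exists a ∈ [e^{−n}, 1] such that a·‖f‖_∞·1_{B₂ⁿ} ≤ f pointwise (which holds when f is in John's position). Then for every integer k with 0 ≤ k ≤ n−1, W_{n−k}(f) ≤ b_{n,k} · ‖f‖₁, where b_{n,k} = ((n+k+1)·(n+k+2)···(2n)) / ((k+1)·(k+2)···n) = ∏_{j=k+1}^{n} (n+j)/j. -/
open MeasureTheory

noncomputable section

/-- `ℝⁿ` with its Euclidean structure. -/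
abbrev Eucl (n : ℕ) := EuclideanSpace ℝ (Fin n)

/-- `f : ℝⁿ → [0,∞)` is log-concave:
`f(tx+(1−t)y) ≥ f(x)^t · f(y)^(1−t)` for all `x, y` and `t ∈ (0,1)`. -/
def IsLogConcave {n : ℕ} (f : Eucl n → ℝ) : Prop :=
  ∀ x y : Eucl n, ∀ t : ℝ, 0 < t → t < 1 →
    f x ^ t * f y ^ (1 - t) ≤ f (t • x + (1 - t) • y)

/-- The class `Q₀ⁿ`: nonnegative, log-concave, upper semicontinuous, integrable
functions with positive integral. -/
def MemQ0 {n : ℕ} (f : Eucl n → ℝ) : Prop :=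
  (∀ x, 0 ≤ f x) ∧ IsLogConcave f ∧ UpperSemicontinuous f ∧
    Integrable f ∧ 0 < ∫ x, f x

/-- `‖f‖_∞ = sup f`. -/
def supNorm {n : ℕ} (f : Eucl n → ℝ) : ℝ := ⨆ x, f x

/-- `‖f‖_p = (∫ f^p)^(1/p)`. -/
def lpNorm {n : ℕ} (p : ℝ) (f : Eucl n → ℝ) : ℝ := (∫ x, f x ^ p) ^ (1 / p)

/-- `‖P_H f‖_{L¹(H)} = ∫_H sup_{z ∈ H⊥} f(y+z) dλ_H(y)`, the `L¹(H)`-norm of the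
projection of `f` onto the subspace `H` (with the Lebesgue measure on `H` induced
by the Euclidean structure). -/
def projL1 {n : ℕ} (f : Eucl n → ℝ) (H : Submodule ℝ (Eucl n)) : ℝ :=
  ∫ y : H, ⨆ z : Hᗮ, f ((y : Eucl n) + (z : Eucl n))

/-- `‖S_H f‖_{L¹(H)} = ∫_H f dλ_H`, the integral of the section `f|_H`. -/
def sectL1 {n : ℕ} (f : Eucl n → ℝ) (H : Submodule ℝ (Eucl n)) : ℝ :=
  ∫ y : H, f (y : Eucl n)

/-- The orthogonal group `O(n)` acting on `ℝⁿ`. -/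
abbrev OG (n : ℕ) := Matrix.orthogonalGroup (Fin n) ℝ

instance (n : ℕ) : MeasurableSpace (OG n) := borel _

/-- The volume `ω_d` of the Euclidean unit ball in `ℝ^d`. -/
def ballVol (d : ℕ) : ℝ := (volume (Metric.closedBall (0 : Eucl d) 1)).toReal

/-- The coordinate subspace `H₀ᵏ = span(e₁, …, e_k)` of `ℝⁿ`. -/
def stdSubspace (n k : ℕ) : Submodule ℝ (Eucl n) :=
  Submodule.span ℝ {v | ∃ i : Fin n, (i : ℕ) < k ∧ v = EuclideanSpace.single i 1}

/-- The quermassintegral `W_j(f)` of a function `f : ℝⁿ → [0,∞)`, defined for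
`0 ≤ j ≤ n-1` (writing `k = n - j`) by
`W_{n−k}(f) = (ω_n/ω_k) ∫_{O(n)} ∫_{H₀ᵏ} sup_{z ∈ (H₀ᵏ)⊥} f(g(y+z)) dλ_k(y) dν(g)`,
where `ν` is the Haar probability measure on `O(n)`, together with the convention
`W_n(f) = ω_n · ‖f‖_∞`.  (For `j = 0` the formula gives `W_0(f) = ‖f‖₁`.) -/
def querm {n : ℕ} (ν : Measure (OG n)) (f : Eucl n → ℝ) (j : ℕ) : ℝ :=
  if j = n then ballVol n * supNorm f
  else (ballVol n / ballVol (n - j)) *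
    ∫ g : OG n,
      (∫ y : stdSubspace n (n - j), ⨆ z : (stdSubspace n (n - j))ᗮ,
        f ((Matrix.toEuclideanLin (g : Matrix (Fin n) (Fin n) ℝ))
            ((y : Eucl n) + (z : Eucl n)))) ∂ν

/-! ### Coordinates -/

/-- Append a last coordinate. -/
def sn {d : ℕ} (y : Eucl d) (r : ℝ) : Eucl (d + 1) :=
  WithLp.toLp 2 (Fin.snoc (α := fun _ => ℝ) y.ofLp r)

/-- Drop the last coordinate. -/
def ini {d : ℕ} (x : Eucl (d + 1)) : Eucl d := WithLp.toLp 2 (fun i => x (Fin.castSucc i))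

@[simp] lemma sn_castSucc {d : ℕ} (y : Eucl d) (r : ℝ) (i : Fin d) :
    sn y r (Fin.castSucc i) = y i := by
  simp [sn]

@[simp] lemma sn_last {d : ℕ} (y : Eucl d) (r : ℝ) : sn y r (Fin.last d) = r := by
  simp [sn]

@[simp] lemma ini_apply {d : ℕ} (x : Eucl (d + 1)) (i : Fin d) :
    ini x i = x (Fin.castSucc i) := rfl

lemma eucl_ext_last {d : ℕ} {x y : Eucl (d + 1)} (h : ∀ i : Fin d, x (Fin.castSucc i) = y (Fin.castSucc i))
    (hl : x (Fin.last d) = y (Fin.last d)) : x = y := by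
  ext i
  induction i using Fin.lastCases with
  | last => exact hl
  | cast i => exact h i

@[simp] lemma ini_sn {d : ℕ} (y : Eucl d) (r : ℝ) : ini (sn y r) = y := by
  ext i; simp

@[simp] lemma sn_ini {d : ℕ} (x : Eucl (d + 1)) : sn (ini x) (x (Fin.last d)) = x := by
  apply eucl_ext_last <;> simp

lemma sn_add {d : ℕ} (y y' : Eucl d) (r r' : ℝ) : sn (y + y') (r + r') = sn y r + sn y' r' := by
  apply eucl_ext_last <;> simp

lemma sn_smul {d : ℕ} (c : ℝ) (y : Eucl d) (r : ℝ) : sn (c • y) (c * r) = c • sn y r := by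
  apply eucl_ext_last <;> simp

lemma sn_sub {d : ℕ} (y y' : Eucl d) (r r' : ℝ) : sn (y - y') (r - r') = sn y r - sn y' r' := by
  apply eucl_ext_last <;> simp

lemma norm_sn_sq {d : ℕ} (y : Eucl d) (r : ℝ) : ‖sn y r‖ ^ 2 = ‖y‖ ^ 2 + r ^ 2 := by
  simp [EuclideanSpace.norm_sq_eq, Fin.sum_univ_castSucc]

lemma norm_sn_zero {d : ℕ} (y : Eucl d) : ‖sn y 0‖ = ‖y‖ := by
  have := norm_sn_sq y 0
  rw [← Real.sqrt_sq (norm_nonneg (sn y 0)), this]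
  simp

/-- last basis vector -/
def eL (d : ℕ) : Eucl (d + 1) := sn 0 1

lemma norm_eL (d : ℕ) : ‖eL d‖ = 1 := by
  have := norm_sn_sq (0 : Eucl d) 1
  rw [← Real.sqrt_sq (norm_nonneg (eL d)), eL, this]
  simp

lemma sn_eq {d : ℕ} (y : Eucl d) (r : ℝ) : sn y r = sn y 0 + r • eL d := by
  rw [eL, ← sn_smul, ← sn_add]; simp

lemma continuous_sn {d : ℕ} : Continuous (fun p : Eucl d × ℝ => sn p.1 p.2) := by
  unfold sn
  refine (PiLp.continuous_toLp 2 _).comp ?_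
  refine continuous_pi fun i => ?_
  induction i using Fin.lastCases with
  | last => simpa using continuous_snd
  | cast i => simp; fun_prop

lemma measurable_sn {d : ℕ} : Measurable (fun p : Eucl d × ℝ => sn p.1 p.2) :=
  continuous_sn.measurable

lemma mp_sn (d : ℕ) :
    MeasurePreserving (fun p : Eucl d × ℝ => sn p.1 p.2) (volume.prod volume) volume := by
  have h1 := (volume_preserving_piFinSuccAbove (fun _ : Fin (d + 1) => ℝ) (Fin.last d)).symm
  have h2 : MeasurePreserving (fun p : Eucl d × ℝ => (p.2, p.1.ofLp)) (volume.prod volume)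
      (volume.prod volume) := by
    have := (MeasurePreserving.prod (MeasurePreserving.id (volume : Measure ℝ))
      (PiLp.volume_preserving_ofLp (Fin d))).comp
      (Measure.measurePreserving_swap (μ := (volume : Measure (Eucl d))) (ν := (volume : Measure ℝ)))
    exact this
  have h3 := ((PiLp.volume_preserving_toLp (Fin (d + 1))).comp h1).comp h2
  have e : (fun p : Eucl d × ℝ => sn p.1 p.2) = (WithLp.toLp 2 ∘
      ⇑(MeasurableEquiv.piFinSuccAbove (fun _ => ℝ) (Fin.last d)).symm) ∘
      fun p : Eucl d × ℝ => (p.2, p.1.ofLp) := by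
    funext p
    simp [sn, MeasurableEquiv.piFinSuccAbove, Fin.insertNthEquiv, Fin.insertNth_last']
  rw [e]
  exact h3

lemma lintegral_sn {d : ℕ} (F : Eucl (d + 1) → ENNReal) (hF : Measurable F) :
    ∫⁻ x, F x = ∫⁻ y : Eucl d, ∫⁻ r : ℝ, F (sn y r) := by
  rw [← (mp_sn d).lintegral_comp hF, lintegral_prod (fun p : Eucl d × ℝ => F (sn p.1 p.2))
    (hF.comp measurable_sn).aemeasurable]

/-- Extension of an isometry by the identity on the last coordinate. -/
def extI {d : ℕ} (h : Eucl d ≃ₗᵢ[ℝ] Eucl d) : Eucl (d + 1) ≃ₗᵢ[ℝ] Eucl (d + 1) :=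
  LinearIsometry.toLinearIsometryEquiv
    { toFun := fun x => sn (h (ini x)) (x (Fin.last d))
      map_add' := by
        intro x y
        rw [← sn_add, ← map_add]; rfl
      map_smul' := by
        intro c x
        rw [RingHom.id_apply, ← sn_smul, ← map_smul]; rfl
      norm_map' := by
        intro x
        show ‖sn (h (ini x)) (x (Fin.last d))‖ = ‖x‖
        rw [← Real.sqrt_sq (norm_nonneg (sn _ _)), norm_sn_sq, h.norm_map, ← norm_sn_sq, sn_ini,
          Real.sqrt_sq (norm_nonneg _)] } rfl

lemma extI_sn {d : ℕ} (h : Eucl d ≃ₗᵢ[ℝ] Eucl d) (y : Eucl d) (r : ℝ) :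
    extI h (sn y r) = sn (h y) r := by
  have : extI h (sn y r) = sn (h (ini (sn y r))) (sn y r (Fin.last d)) := rfl
  rw [this]; simp

/-! ### The class of functions -/

open Filter Topology in
/-- Technical class of functions preserved by projections. -/
structure Cls (N : ℝ) {d : ℕ} (φ : Eucl d → ℝ) : Prop where
  nonneg : ∀ x, 0 ≤ φ x
  bdd : ∃ M, ∀ x, φ x ≤ M
  lip : ∃ L, LipschitzWith L φ
  int : Integrable φ
  star : ∀ (x v : Eucl d) (t : ℝ), ‖v‖ ≤ 1 → 0 ≤ t → t ≤ 1 →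
    Real.exp (-(N * t)) * φ x ≤ φ ((1 - t) • x + t • v)

section
open Filter Topology

lemma Cls.continuous {N : ℝ} {d : ℕ} {φ : Eucl d → ℝ} (h : Cls N φ) : Continuous φ := by
  obtain ⟨L, hL⟩ := h.lip
  exact hL.continuous

lemma tendsto_slope_seq {d : ℕ} {φ : Eucl d → ℝ} {x : Eucl d} (hd : DifferentiableAt ℝ φ x)
    (v : Eucl d) (s : ℕ → ℝ) (hs0 : ∀ n, 0 < s n) (hs : Tendsto s atTop (𝓝 0)) :
    Tendsto (fun n => (φ (x + s n • v) - φ x) / s n) atTop (𝓝 (fderiv ℝ φ x v)) := by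
  have h1 : HasLineDerivAt ℝ φ (fderiv ℝ φ x v) x v := hd.hasFDerivAt.hasLineDerivAt v
  have h2 := h1.tendsto_slope_zero_right
  have h3 : Tendsto s atTop (𝓝[>] 0) :=
    tendsto_nhdsWithin_iff.2 ⟨hs, Eventually.of_forall hs0⟩
  have h4 := h2.comp h3
  refine h4.congr fun n => ?_
  simp [div_eq_inv_mul]

lemma tendsto_inv_seq : Tendsto (fun n : ℕ => 1 / ((n : ℝ) + 2)) atTop (𝓝 0) := by
  have h := (tendsto_add_atTop_iff_nat 1).2 (tendsto_one_div_add_atTop_nhds_zero_nat (𝕜 := ℝ))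
  refine h.congr fun n => ?_
  push_cast
  congr 1
  ring

lemma seq_pos (n : ℕ) : 0 < 1 / ((n : ℝ) + 2) := by positivity

lemma seq_lt (n : ℕ) : 1 / ((n : ℝ) + 2) ≤ 1 / 2 := by
  apply one_div_le_one_div_of_le <;> [norm_num; linarith [n.cast_nonneg (α := ℝ)]]

lemma Cls.diff_lower {N : ℝ} {d : ℕ} {φ : Eucl d → ℝ} (h : Cls N φ) (x v : Eucl d)
    (hv : ‖v‖ ≤ 1) (t : ℝ) (ht0 : 0 < t) (ht1 : t ≤ 1) :
    -(N * φ x) ≤ (φ (x + t • (v - x)) - φ x) / t := by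
  have h1 := h.star x v t hv ht0.le ht1
  have e : (1 - t) • x + t • v = x + t • (v - x) := by
    rw [smul_sub, sub_smul, one_smul]; abel
  rw [e] at h1
  rw [le_div_iff₀ ht0]
  have h2 := Real.add_one_le_exp (-(N * t))
  nlinarith [mul_le_mul_of_nonneg_right h2 (h.nonneg x)]

lemma Cls.fderiv_lower {N : ℝ} {d : ℕ} {φ : Eucl d → ℝ} (h : Cls N φ) {x : Eucl d}
    (hd : DifferentiableAt ℝ φ x) (v : Eucl d)
    (hv : ‖v‖ ≤ 1) : -(N * φ x) ≤ fderiv ℝ φ x (v - x) :=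
  ge_of_tendsto' (tendsto_slope_seq hd (v - x) _ seq_pos tendsto_inv_seq) fun n =>
    h.diff_lower x v hv _ (seq_pos n) ((seq_lt n).trans (by norm_num))

lemma Cls.norm_fderiv_le {N : ℝ} {d : ℕ} {φ : Eucl d → ℝ} (h : Cls N φ) {x : Eucl d}
    (hd : DifferentiableAt ℝ φ x) :
    ‖fderiv ℝ φ x‖ ≤ fderiv ℝ φ x (-x) + N * φ x := by
  have key : ∀ v : Eucl d, ‖v‖ ≤ 1 → |fderiv ℝ φ x v| ≤ fderiv ℝ φ x (-x) + N * φ x := by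
    intro v hv
    have h1 := h.fderiv_lower hd v hv
    have h2 := h.fderiv_lower hd (-v) (by simpa using hv)
    rw [sub_eq_add_neg, map_add] at h1 h2
    rw [map_neg _ v] at h2
    rw [abs_le]
    constructor <;> linarith
  have h0 : 0 ≤ fderiv ℝ φ x (-x) + N * φ x := (abs_nonneg _).trans (key 0 (by simp))
  refine ContinuousLinearMap.opNorm_le_of_unit_norm h0 fun v hv => ?_
  simpa using key v hv.le

lemma scale_limit (d : ℕ) :
    Tendsto (fun n : ℕ => (((1 - 1 / ((n : ℝ) + 2)) ^ d)⁻¹ - 1) / (1 / ((n : ℝ) + 2))) atTop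
      (𝓝 (d : ℝ)) := by
  have h1 : HasDerivAt (fun t : ℝ => ((1 - t) ^ d)⁻¹) (d : ℝ) 0 := by
    have := (((hasDerivAt_id (0 : ℝ)).const_sub 1).pow d).inv (by simp)
    refine HasDerivAt.congr_deriv this ?_
    simp
  have h2 := h1.tendsto_slope_zero_right
  have h3 : Tendsto (fun n : ℕ => 1 / ((n : ℝ) + 2)) atTop (𝓝[>] 0) :=
    tendsto_nhdsWithin_iff.2 ⟨tendsto_inv_seq, Eventually.of_forall seq_pos⟩
  refine (h2.comp h3).congr fun n => ?_
  simp [div_eq_inv_mul]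

lemma Cls.lintegral_fderiv_le {N : ℝ} {d : ℕ} {φ : Eucl d → ℝ} (h : Cls N φ) :
    ∫⁻ x, ‖fderiv ℝ φ x‖ₑ ≤ ENNReal.ofReal ((N + d) * ∫ x, φ x) := by
  obtain ⟨L, hL⟩ := h.lip
  set s : ℕ → ℝ := fun n => 1 / ((n : ℝ) + 2) with hs
  set g : ℕ → Eucl d → ℝ := fun n x => (φ (x + s n • (0 - x)) - φ x) / s n + N * φ x with hg
  have hgc : ∀ n, Continuous (g n) := by
    intro n
    have := h.continuous
    simp only [hg]
    fun_prop
  have hg0 : ∀ n x, 0 ≤ g n x := by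
    intro n x
    have := h.diff_lower x 0 (by simp) (s n) (seq_pos n) ((seq_lt n).trans (by norm_num))
    simp only [hg]; linarith
  have hcomp : ∀ n, (fun x => φ (x + s n • (0 - x))) = fun x => φ ((1 - s n) • x) := by
    intro n; ext x; congr 1
    rw [zero_sub, smul_neg, sub_smul, one_smul]; abel
  have hs1 : ∀ n, 0 < 1 - s n := fun n => by
    have := seq_lt n; simp only [hs]; linarith
  have hi1 : ∀ n, Integrable (fun x => φ (x + s n • (0 - x))) := by
    intro n
    rw [hcomp]
    exact h.int.comp_smul (hs1 n).ne'
  have hgi : ∀ n, ∫ x, g n x = ((((1 - s n) ^ d)⁻¹ - 1) / s n + N) * ∫ x, φ x := by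
    intro n
    simp only [hg]
    have hi2 : Integrable (fun x => (φ (x + s n • (0 - x)) - φ x) / s n) :=
      ((hi1 n).sub h.int).div_const _
    rw [integral_add hi2 (h.int.const_mul N),
      integral_div, integral_sub (hi1 n) h.int, integral_const_mul, hcomp,
      Measure.integral_comp_smul]
    have : |((1 - s n) ^ d)⁻¹| = ((1 - s n) ^ d)⁻¹ := abs_of_pos (by have := hs1 n; positivity)
    simp only [finrank_euclideanSpace, Fintype.card_fin, this, smul_eq_mul]
    ring
  have hginteg : ∀ n, Integrable (g n) := fun n =>
    (((hi1 n).sub h.int).div_const _).add (h.int.const_mul N)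
  calc ∫⁻ x, ‖fderiv ℝ φ x‖ₑ ≤ ∫⁻ x, liminf (fun n => ENNReal.ofReal (g n x)) atTop := by
        apply lintegral_mono_ae
        filter_upwards [hL.ae_differentiableAt] with x hx
        have ht : Tendsto (fun n => g n x) atTop (𝓝 (fderiv ℝ φ x (0 - x) + N * φ x)) :=
          (tendsto_slope_seq hx (0 - x) s seq_pos tendsto_inv_seq).add_const _
        have ht2 : Tendsto (fun n => ENNReal.ofReal (g n x)) atTop
            (𝓝 (ENNReal.ofReal (fderiv ℝ φ x (0 - x) + N * φ x))) :=
          (ENNReal.continuous_ofReal.tendsto _).comp ht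
        rw [ht2.liminf_eq, ← ofReal_norm]
        apply ENNReal.ofReal_le_ofReal
        rw [zero_sub]
        exact h.norm_fderiv_le hx
    _ ≤ liminf (fun n => ∫⁻ x, ENNReal.ofReal (g n x)) atTop :=
        lintegral_liminf_le fun n => (hgc n).measurable.ennreal_ofReal
    _ = ENNReal.ofReal ((N + d) * ∫ x, φ x) := by
        apply Tendsto.liminf_eq
        have : (fun n => ∫⁻ x, ENNReal.ofReal (g n x)) = fun n =>
            ENNReal.ofReal (((((1 - s n) ^ d)⁻¹ - 1) / s n + N) * ∫ x, φ x) := by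
          ext n
          rw [← hgi, ofReal_integral_eq_lintegral_ofReal (hginteg n)
            (Eventually.of_forall (hg0 n))]
        rw [this]
        refine (ENNReal.continuous_ofReal.tendsto _).comp ?_
        rw [add_comm N]
        exact ((scale_limit d).add_const N).mul_const _
end

/-! ### Projection by one dimension -/

/-- Projection (supremum) along the last coordinate. -/
def proj {d : ℕ} (φ : Eucl (d + 1) → ℝ) (y : Eucl d) : ℝ := ⨆ r : ℝ, φ (sn y r)

section
open Filter Topology Set

lemma exists_small_right {ψ : ℝ → ℝ} (hi : Integrable ψ) (x : ℝ)
    {ε : ℝ} (hε : 0 < ε) : ∃ b, x < b ∧ ψ b < ε := by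
  by_contra! hc
  have : IntegrableOn (fun _ : ℝ => ε) (Ioi x) := by
    refine Integrable.mono' (hi.integrableOn (s := Ioi x)) (by fun_prop) ?_
    refine (ae_restrict_iff' measurableSet_Ioi).2 (Eventually.of_forall fun b hb => ?_)
    rw [Real.norm_of_nonneg hε.le]
    exact hc b hb
  rw [integrableOn_const_iff (by simp)] at this
  simp [hε.ne'] at this

lemma exists_small_left {ψ : ℝ → ℝ} (hi : Integrable ψ) (x : ℝ)
    {ε : ℝ} (hε : 0 < ε) : ∃ a, a < x ∧ ψ a < ε := by
  obtain ⟨b, hb, hb2⟩ := exists_small_right (ψ := fun r => ψ (-r)) hi.comp_neg (-x) hε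
  exact ⟨-b, by linarith, hb2⟩

lemma lip_ftc {ψ : ℝ → ℝ} {L : NNReal} (hL : LipschitzWith L ψ) {a b : ℝ} (hab : a ≤ b) :
    ENNReal.ofReal |ψ b - ψ a| ≤ ∫⁻ r in Ioc a b, ‖deriv ψ r‖ₑ := by
  have hac : AbsolutelyContinuousOnInterval ψ a b :=
    (hL.lipschitzOnWith (s := uIcc a b)).absolutelyContinuousOnInterval
  rw [← hac.integral_deriv_eq_sub, intervalIntegral.integral_of_le hab, ← Real.norm_eq_abs,
    ofReal_norm]
  exact enorm_integral_le_lintegral_enorm _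

lemma one_dim {ψ : ℝ → ℝ} {L : NNReal} (hL : LipschitzWith L ψ) (hi : Integrable ψ) (x : ℝ) :
    ENNReal.ofReal (2 * ψ x) ≤ ∫⁻ r, ‖deriv ψ r‖ₑ := by
  apply ENNReal.le_of_forall_pos_le_add
  intro ε hε _
  obtain ⟨b, hb, hb2⟩ := exists_small_right hi x (ε := ε / 2) (by positivity)
  obtain ⟨a, ha, ha2⟩ := exists_small_left hi x (ε := ε / 2) (by positivity)
  have h1 := lip_ftc hL ha.le
  have h2 := lip_ftc hL hb.le
  have h3 : (∫⁻ r in Ioc a x, ‖deriv ψ r‖ₑ) + ∫⁻ r in Ioc x b, ‖deriv ψ r‖ₑ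
      ≤ ∫⁻ r, ‖deriv ψ r‖ₑ := by
    rw [← lintegral_union measurableSet_Ioc (Ioc_disjoint_Ioc_of_le le_rfl)]
    exact setLIntegral_le_lintegral _ _
  calc ENNReal.ofReal (2 * ψ x) ≤ ENNReal.ofReal (|ψ x - ψ a| + |ψ b - ψ x| + ε) := by
        apply ENNReal.ofReal_le_ofReal
        have := le_abs_self (ψ x - ψ a)
        have := neg_abs_le (ψ b - ψ x)
        linarith
    _ = ENNReal.ofReal |ψ x - ψ a| + ENNReal.ofReal |ψ b - ψ x| + ε := by
        rw [ENNReal.ofReal_add (by positivity) (by positivity),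
          ENNReal.ofReal_add (by positivity) (by positivity), ENNReal.ofReal_coe_nnreal]
    _ ≤ _ := by
        gcongr
        exact (add_le_add h1 h2).trans h3

lemma lip_line {d : ℕ} {φ : Eucl (d + 1) → ℝ} {L : NNReal} (hL : LipschitzWith L φ) (y : Eucl d) :
    LipschitzWith L (fun r => φ (sn y r)) := by
  refine LipschitzWith.of_dist_le_mul fun r r' => ?_
  refine (hL.dist_le_mul _ _).trans (le_of_eq ?_)
  congr 1
  rw [dist_eq_norm, sn_eq y r, sn_eq y r', add_sub_add_left_eq_sub, ← sub_smul, norm_smul,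
    norm_eL, mul_one, dist_eq_norm]

lemma deriv_line {d : ℕ} {φ : Eucl (d + 1) → ℝ} {y : Eucl d} {r : ℝ}
    (hd : DifferentiableAt ℝ φ (sn y r)) :
    deriv (fun r => φ (sn y r)) r = fderiv ℝ φ (sn y r) (eL d) := by
  have h1 : HasDerivAt (fun r => sn y r) (eL d) r := by
    have : (fun r => sn y r) = fun r => sn y 0 + r • eL d := by
      funext r; exact sn_eq y r
    rw [this]
    simpa using ((hasDerivAt_id r).smul_const (eL d)).const_add (sn y 0)
  exact (hd.hasFDerivAt.comp_hasDerivAt r h1).deriv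

lemma Cls.bddAbove {N : ℝ} {d : ℕ} {φ : Eucl (d + 1) → ℝ} (h : Cls N φ) (y : Eucl d) :
    BddAbove (range fun r => φ (sn y r)) := by
  obtain ⟨M, hM⟩ := h.bdd
  exact ⟨M, by rintro _ ⟨r, rfl⟩; exact hM _⟩

lemma Cls.le_proj {N : ℝ} {d : ℕ} {φ : Eucl (d + 1) → ℝ} (h : Cls N φ) (y : Eucl d) (r : ℝ) :
    φ (sn y r) ≤ proj φ y := le_ciSup (h.bddAbove y) r

lemma Cls.lintegral_proj_le {N : ℝ} {d : ℕ} {φ : Eucl (d + 1) → ℝ} (h : Cls N φ) :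
    2 * ∫⁻ y, ENNReal.ofReal (proj φ y) ≤ ∫⁻ x, ‖fderiv ℝ φ x (eL d)‖ₑ := by
  obtain ⟨L, hL⟩ := h.lip
  rw [lintegral_sn _ (measurable_fderiv_apply_const ℝ φ (eL d)).enorm,
    ← lintegral_const_mul' _ _ (by simp)]
  apply lintegral_mono_ae
  have h1 : ∀ᵐ y : Eucl d, ∀ᵐ r : ℝ, DifferentiableAt ℝ φ (sn y r) :=
    Measure.ae_ae_of_ae_prod ((mp_sn d).quasiMeasurePreserving.ae hL.ae_differentiableAt)
  have h2 : ∀ᵐ y : Eucl d, Integrable (fun r : ℝ => φ (sn y r)) := by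
    have : Integrable (fun p : Eucl d × ℝ => φ (sn p.1 p.2)) (volume.prod volume) :=
      (mp_sn d).integrable_comp_of_integrable h.int
    exact this.prod_right_ae
  filter_upwards [h1, h2] with y hy1 hy2
  have h3 : ∫⁻ r, ‖fderiv ℝ φ (sn y r) (eL d)‖ₑ = ∫⁻ r, ‖deriv (fun r => φ (sn y r)) r‖ₑ := by
    apply lintegral_congr_ae
    filter_upwards [hy1] with r hr
    rw [deriv_line hr]
  rw [h3]
  have h4 := one_dim (lip_line hL y) hy2
  set C := ∫⁻ r, ‖deriv (fun r => φ (sn y r)) r‖ₑ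
  by_cases hC : C = ⊤
  · rw [hC]; exact le_top
  have h5 : proj φ y ≤ C.toReal / 2 := by
    refine ciSup_le fun r => ?_
    have := (ENNReal.ofReal_le_iff_le_toReal hC).1 (h4 r)
    linarith
  calc 2 * ENNReal.ofReal (proj φ y) = ENNReal.ofReal (2 * proj φ y) := by
        rw [ENNReal.ofReal_mul (by norm_num)]; simp
    _ ≤ C := (ENNReal.ofReal_le_iff_le_toReal hC).2 (by linarith)

lemma Cls.proj {N : ℝ} {d : ℕ} {φ : Eucl (d + 1) → ℝ} (h : Cls N φ) : Cls N (proj φ) := by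
  obtain ⟨L, hL⟩ := h.lip
  have hlip : LipschitzWith L (_root_.proj φ) := by
    refine LipschitzWith.of_le_add_mul L fun y y' => ciSup_le fun r => ?_
    have h1 := (hL.dist_le_mul (sn y r) (sn y' r))
    have h2 : dist (sn y r) (sn y' r) = dist y y' := by
      rw [dist_eq_norm, dist_eq_norm, ← sn_sub, sub_self, norm_sn_zero]
    rw [h2, Real.dist_eq] at h1
    have := le_abs_self (φ (sn y r) - φ (sn y' r))
    have := h.le_proj y' r
    linarith
  have hnn : ∀ y, 0 ≤ _root_.proj φ y := fun y => Real.iSup_nonneg fun r => h.nonneg _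
  refine ⟨hnn, ?_, ⟨L, hlip⟩, ?_, ?_⟩
  · obtain ⟨M, hM⟩ := h.bdd
    exact ⟨M, fun y => ciSup_le fun r => hM _⟩
  · refine ⟨hlip.continuous.aestronglyMeasurable, ?_⟩
    have h1 : ∫⁻ x, ‖fderiv ℝ φ x (eL d)‖ₑ ≤ ∫⁻ x, ‖fderiv ℝ φ x‖ₑ := by
      apply lintegral_mono
      intro x
      have := (fderiv ℝ φ x).le_opNorm (eL d)
      rw [norm_eL, mul_one] at this
      exact enorm_le_iff_norm_le.2 this
    have h2 : 2 * ∫⁻ y, ENNReal.ofReal (_root_.proj φ y) < ⊤ :=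
      (h.lintegral_proj_le.trans (h1.trans h.lintegral_fderiv_le)).trans_lt ENNReal.ofReal_lt_top
    rw [hasFiniteIntegral_iff_ofReal (Eventually.of_forall hnn)]
    refine lt_of_le_of_lt ?_ h2
    rw [two_mul]
    exact le_self_add
  · intro x v t hv ht0 ht1
    rw [_root_.proj, Real.mul_iSup_of_nonneg (Real.exp_pos _).le]
    refine ciSup_le fun r => ?_
    have h1 := h.star (sn x r) (sn v 0) t (by rwa [norm_sn_zero]) ht0 ht1
    rw [← sn_smul, ← sn_smul, ← sn_add] at h1
    exact h1.trans (h.le_proj _ _)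

lemma proj_comp_ext {d : ℕ} (φ : Eucl (d + 1) → ℝ) (h : Eucl d ≃ₗᵢ[ℝ] Eucl d) :
    proj (fun x => φ (extI h x)) = fun y => proj φ (h y) := by
  funext y
  simp only [proj, extI_sn]

end

/-! ### Averaging constants -/

section
open Filter Topology Set

lemma exists_isometry {d : ℕ} (θ : Eucl (d + 1)) (hθ : ‖θ‖ = 1) :
    ∃ h : Eucl (d + 1) ≃ₗᵢ[ℝ] Eucl (d + 1), h (eL d) = θ :=
  ⟨_, Submodule.reflection_sub (by rw [hθ, norm_eL])⟩

/-- Gaussian weight. -/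
def gw {d : ℕ} (v : Eucl d) : ENNReal := ENNReal.ofReal (Real.exp (-‖v‖ ^ 2))

lemma measurable_gw {d : ℕ} : Measurable (gw (d := d)) := by
  unfold gw
  fun_prop

/-- Gaussian first coordinate moment. -/
def gS (d : ℕ) : ENNReal := ∫⁻ v : Eucl (d + 1), ‖v (Fin.last d)‖ₑ * gw v

/-- Gaussian first norm moment. -/
def gG (d : ℕ) : ENNReal := ∫⁻ v : Eucl (d + 1), ‖v‖ₑ * gw v

lemma inner_eL {d : ℕ} (v : Eucl (d + 1)) : inner ℝ (eL d) v = v (Fin.last d) := by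
  simp [PiLp.inner_apply, Fin.sum_univ_castSucc, eL]

lemma avg_functional {d : ℕ} (l : Eucl (d + 1) →L[ℝ] ℝ) :
    ∫⁻ v, ‖l v‖ₑ * gw v = ‖l‖ₑ * gS d := by
  obtain ⟨ξ, rfl⟩ := (InnerProductSpace.toDual ℝ (Eucl (d + 1))).surjective l
  have hn : ‖InnerProductSpace.toDual ℝ (Eucl (d + 1)) ξ‖ₑ = ‖ξ‖ₑ := by
    rw [← ofReal_norm, ← ofReal_norm, LinearIsometryEquiv.norm_map]
  rw [hn]
  simp only [InnerProductSpace.toDual_apply_apply]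
  by_cases h0 : ξ = 0
  · simp [h0]
  have hξ : ‖ξ‖ ≠ 0 := norm_ne_zero_iff.2 h0
  obtain ⟨h, hh⟩ := exists_isometry (‖ξ‖⁻¹ • ξ) (by
    rw [norm_smul, norm_inv, norm_norm, inv_mul_cancel₀ hξ])
  have hξ2 : ξ = ‖ξ‖ • h (eL d) := by rw [hh, smul_smul, mul_inv_cancel₀ hξ, one_smul]
  have hmeas : Measurable fun v : Eucl (d + 1) => ‖(inner ℝ ξ v : ℝ)‖ₑ * gw v :=
    (by fun_prop : Measurable fun v : Eucl (d + 1) => ‖(inner ℝ ξ v : ℝ)‖ₑ).mul measurable_gw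
  rw [← h.measurePreserving.lintegral_comp hmeas, gS, ← lintegral_const_mul' _ _ enorm_ne_top]
  congr 1
  ext v
  have : (inner ℝ ξ (h v) : ℝ) = ‖ξ‖ * v (Fin.last d) := by
    conv_lhs => rw [hξ2]
    rw [real_inner_smul_left, h.inner_map_map, inner_eL]
  rw [this, enorm_mul, enorm_norm, gw, gw, h.norm_map, mul_assoc]

lemma integral_gauss (d : ℕ) : ∫ v : Eucl d, Real.exp (-‖v‖ ^ 2) = √Real.pi ^ d := by
  have := GaussianFourier.integral_rexp_neg_mul_sq_norm (V := Eucl d) (b := 1) one_pos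
  simp only [neg_mul, one_mul, div_one, finrank_euclideanSpace, Fintype.card_fin] at this
  rw [this, Real.sqrt_eq_rpow, ← Real.rpow_mul_natCast Real.pi_pos.le]
  congr 1
  ring

lemma lintegral_gauss (d : ℕ) : ∫⁻ v : Eucl d, gw v = ENNReal.ofReal (√Real.pi ^ d) := by
  have h1 := integral_gauss d
  have hi : Integrable (fun v : Eucl d => Real.exp (-‖v‖ ^ 2)) := by
    by_contra hc
    rw [integral_undef hc] at h1
    have : 0 < √Real.pi ^ d := by have := Real.pi_pos; positivity
    linarith
  rw [← h1, ofReal_integral_eq_lintegral_ofReal hi (Eventually.of_forall fun _ => (Real.exp_pos _).le)]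
  rfl

lemma integral_radial (d : ℕ) :
    ∫ r in Ioi (0 : ℝ), r ^ d * (r * Real.exp (-r ^ 2)) = Real.Gamma (d / 2 + 1) / 2 := by
  have := integral_rpow_mul_exp_neg_rpow (p := 2) (q := d + 1) (by norm_num)
    (by have := d.cast_nonneg (α := ℝ); linarith)
  rw [show ((d : ℝ) + 1 + 1) / 2 = d / 2 + 1 by ring] at this
  rw [div_eq_inv_mul, ← one_div, ← this]
  refine setIntegral_congr_fun measurableSet_Ioi fun r (hr : 0 < r) => ?_
  have e1 : r ^ ((d : ℝ) + 1) = r ^ (d + 1) := by exact_mod_cast Real.rpow_natCast r (d + 1)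
  have e2 : r ^ (2 : ℝ) = r ^ 2 := by exact_mod_cast Real.rpow_natCast r 2
  simp only [e1, e2]
  ring

lemma lintegral_abs_gauss :
    ∫⁻ r : ℝ, ‖r‖ₑ * ENNReal.ofReal (Real.exp (-r ^ 2)) = 1 := by
  have h1 : ∫ r : ℝ, |r| * Real.exp (-|r| ^ 2) = 1 := by
    rw [integral_comp_abs (f := fun r => r * Real.exp (-r ^ 2))]
    have := integral_radial 0
    simp at this
    rw [this]; norm_num
  have hi : Integrable (fun r : ℝ => |r| * Real.exp (-|r| ^ 2)) := by
    by_contra hc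
    rw [integral_undef hc] at h1
    norm_num at h1
  have h2 := ofReal_integral_eq_lintegral_ofReal hi (Eventually.of_forall fun _ => by positivity)
  rw [h1, ENNReal.ofReal_one] at h2
  rw [h2]
  congr 1
  ext r
  rw [ENNReal.ofReal_mul (abs_nonneg _), sq_abs, ← Real.norm_eq_abs, ofReal_norm]

lemma gS_eq (d : ℕ) : gS d = ENNReal.ofReal (√Real.pi ^ d) := by
  have hm : Measurable fun v : Eucl (d + 1) => ‖v (Fin.last d)‖ₑ * gw v :=
    (by fun_prop : Measurable fun v : Eucl (d + 1) => ‖v (Fin.last d)‖ₑ).mul measurable_gw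
  rw [gS, lintegral_sn _ hm, ← lintegral_gauss]
  congr 1
  ext y
  rw [← mul_one (gw y), ← lintegral_abs_gauss, ← lintegral_const_mul' (gw y) _ ENNReal.ofReal_ne_top]
  congr 1
  ext r
  rw [sn_last, gw, gw, norm_sn_sq, neg_add, Real.exp_add, ENNReal.ofReal_mul (Real.exp_pos _).le]
  ring

lemma volume_zero : (volume : Measure (Eucl 0)) univ = 1 := by
  have h := lintegral_gauss 0
  have h2 : ∀ v : Eucl 0, gw v = 1 := by
    intro v
    rw [Subsingleton.elim v 0]; simp [gw]
  simpa [h2] using h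

lemma ballVol_eq (d : ℕ) : ballVol d = √Real.pi ^ d / Real.Gamma (d / 2 + 1) := by
  rw [ballVol]
  cases d with
  | zero =>
    have : Metric.closedBall (0 : Eucl 0) 1 = univ := by
      ext x; simp [Subsingleton.elim x 0]
    rw [this, volume_zero]; simp
  | succ d =>
    rw [EuclideanSpace.volume_closedBall (Fin (d + 1)) (0 : Eucl (d + 1)) 1]
    have : 0 < Real.Gamma (((d + 1 : ℕ) : ℝ) / 2 + 1) := Real.Gamma_pos_of_pos (by positivity)
    simp only [ENNReal.ofReal_one, one_pow, one_mul, Fintype.card_fin]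
    rw [ENNReal.toReal_ofReal (by positivity)]

lemma ballVol_pos (d : ℕ) : 0 < ballVol d := by
  rw [ballVol_eq]
  have := Real.pi_pos
  have : 0 < Real.Gamma ((d : ℝ) / 2 + 1) := Real.Gamma_pos_of_pos (by positivity)
  positivity

lemma gG_eq (d : ℕ) : gG d =
    ENNReal.ofReal ((d + 1) * ballVol (d + 1) * (Real.Gamma (d / 2 + 1) / 2)) := by
  have h1 := integral_fun_norm_addHaar (volume : Measure (Eucl (d + 1)))
    (fun r => r * Real.exp (-r ^ 2))
  have hb : (volume : Measure (Eucl (d + 1))).real (Metric.ball 0 1) = ballVol (d + 1) := by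
    rw [ballVol, Measure.addHaar_closedBall_eq_addHaar_ball]; rfl
  simp only [finrank_euclideanSpace, Fintype.card_fin, add_tsub_cancel_right, smul_eq_mul,
    integral_radial, hb, nsmul_eq_mul] at h1
  have hpos : 0 < ((d + 1 : ℕ) : ℝ) * (ballVol (d + 1) * (Real.Gamma (d / 2 + 1) / 2)) := by
    have : 0 < Real.Gamma ((d : ℝ) / 2 + 1) := Real.Gamma_pos_of_pos (by positivity)
    have := ballVol_pos (d + 1)
    positivity
  have hi : Integrable (fun v : Eucl (d + 1) => ‖v‖ * Real.exp (-‖v‖ ^ 2)) := by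
    by_contra hc
    rw [integral_undef hc] at h1
    linarith
  have h2 := ofReal_integral_eq_lintegral_ofReal hi (Eventually.of_forall fun _ => by positivity)
  rw [h1] at h2
  push_cast at h2
  rw [mul_assoc, h2, gG]
  congr 1
  ext v
  rw [ENNReal.ofReal_mul (norm_nonneg _), ofReal_norm, gw]

lemma const_rel (d : ℕ) :
    ENNReal.ofReal ((d + 1) * ballVol (d + 1)) * gS d = 2 * gG d * ENNReal.ofReal (ballVol d) := by
  have : 0 < Real.Gamma ((d : ℝ) / 2 + 1) := Real.Gamma_pos_of_pos (by positivity)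
  have := ballVol_pos (d + 1)
  have := ballVol_pos d
  rw [gS_eq, gG_eq, ← ENNReal.ofReal_mul (by positivity),
    show (2 : ENNReal) = ENNReal.ofReal 2 by simp, ← ENNReal.ofReal_mul (by positivity),
    ← ENNReal.ofReal_mul (by positivity), ballVol_eq d]
  congr 1
  field_simp

end

/-! ### The averaged one-dimensional step -/

section
open Filter Topology Set

/-- Absolute value of the directional derivative, as an upper limit. -/
def dd {d : ℕ} (φ : Eucl d → ℝ) (x v : Eucl d) : ENNReal :=
  limsup (fun n : ℕ => ‖(φ (x + (1 / ((n : ℝ) + 2)) • v) - φ x) / (1 / ((n : ℝ) + 2))‖ₑ) atTop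

lemma dd_eq {d : ℕ} {φ : Eucl d → ℝ} {x : Eucl d} (hd : DifferentiableAt ℝ φ x) (v : Eucl d) :
    dd φ x v = ‖fderiv ℝ φ x v‖ₑ :=
  ((continuous_enorm.tendsto _).comp
    (tendsto_slope_seq hd v _ seq_pos tendsto_inv_seq)).limsup_eq

/-- A rotation invariant random family in the class. -/
structure Fam (N : ℝ) {Ω : Type} [MeasurableSpace Ω] (ν : Measure Ω) {d : ℕ}
    (φ : Ω → Eucl d → ℝ) : Prop where
  cls : ∀ ω, Cls N (φ ω)
  meas : Measurable fun p : Ω × Eucl d => φ p.1 p.2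
  inv : ∀ h : Eucl d ≃ₗᵢ[ℝ] Eucl d, ∃ T : Ω → Ω, MeasurePreserving T ν ν ∧
    ∀ ω x, φ (T ω) x = φ ω (h x)

variable {N : ℝ} {Ω : Type} [MeasurableSpace Ω] {ν : Measure Ω} {d : ℕ}

lemma Fam.measurable_dd {φ : Ω → Eucl d → ℝ} (hF : Fam N ν φ) :
    Measurable fun q : (Ω × Eucl d) × Eucl d => dd (φ q.1.1) q.1.2 q.2 := by
  refine Measurable.limsup fun n => Measurable.enorm ?_
  refine Measurable.div_const (Measurable.sub ?_ ?_) _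
  · exact hF.meas.comp (f := fun q : (Ω × Eucl d) × Eucl d =>
      (q.1.1, q.1.2 + (1 / ((n : ℝ) + 2)) • q.2)) (by fun_prop)
  · exact hF.meas.comp (f := fun q : (Ω × Eucl d) × Eucl d => q.1) (by fun_prop)

lemma Cls.ae_diff {φ : Eucl d → ℝ} (h : Cls N φ) : ∀ᵐ x, DifferentiableAt ℝ φ x := by
  obtain ⟨L, hL⟩ := h.lip
  exact hL.ae_differentiableAt

lemma Cls.lintegral_dd {φ : Eucl d → ℝ} (h : Cls N φ) (v : Eucl d) :
    ∫⁻ x, dd φ x v = ∫⁻ x, ‖fderiv ℝ φ x v‖ₑ := by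
  apply lintegral_congr_ae
  filter_upwards [h.ae_diff] with x hx
  exact dd_eq hx v

lemma Cls.lintegral_dd_smul {φ : Eucl d → ℝ} (h : Cls N φ) (v : Eucl d) (c : ℝ) :
    ∫⁻ x, dd φ x (c • v) = ‖c‖ₑ * ∫⁻ x, dd φ x v := by
  rw [h.lintegral_dd, h.lintegral_dd, ← lintegral_const_mul' _ _ enorm_ne_top]
  congr 1
  ext x
  rw [map_smul, smul_eq_mul, enorm_mul]

lemma Fam.measurable_inner {φ : Ω → Eucl d → ℝ} (hF : Fam N ν φ) (v : Eucl d) :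
    Measurable fun ω => ∫⁻ x, dd (φ ω) x v := by
  have := hF.measurable_dd.comp (f := fun p : Ω × Eucl d => (p, v)) (by fun_prop)
  exact this.lintegral_prod_right'

lemma dd_comp {φ : Eucl d → ℝ} (h : Eucl d ≃ₗᵢ[ℝ] Eucl d) (x v : Eucl d) :
    dd (fun x => φ (h x)) x v = dd φ (h x) (h v) := by
  simp only [dd, map_add, map_smul]

lemma Fam.dir_eq {φ : Ω → Eucl (d + 1) → ℝ} (hF : Fam N ν φ) (v : Eucl (d + 1)) :
    ∫⁻ ω, ∫⁻ x, dd (φ ω) x v ∂volume ∂ν = ‖v‖ₑ * ∫⁻ ω, ∫⁻ x, dd (φ ω) x (eL d) ∂volume ∂ν := by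
  by_cases hv : v = 0
  · subst hv
    have : ∀ ω, ∫⁻ x, dd (φ ω) x 0 = 0 := by
      intro ω
      rw [(hF.cls ω).lintegral_dd]; simp
    simp [this]
  have hn : ‖v‖ ≠ 0 := norm_ne_zero_iff.2 hv
  set θ := ‖v‖⁻¹ • v with hθ
  have hvθ : v = ‖v‖ • θ := by rw [hθ, smul_smul, mul_inv_cancel₀ hn, one_smul]
  obtain ⟨h, hh⟩ := exists_isometry θ (by
    rw [hθ, norm_smul, norm_inv, norm_norm, inv_mul_cancel₀ hn])
  obtain ⟨T, hT, hT2⟩ := hF.inv h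
  have e1 : ∫⁻ ω, ∫⁻ x, dd (φ ω) x (eL d) ∂volume ∂ν = ∫⁻ ω, ∫⁻ x, dd (φ ω) x θ ∂volume ∂ν := by
    rw [← hT.lintegral_comp (hF.measurable_inner (eL d))]
    congr 1
    ext ω
    have : φ (T ω) = fun x => φ ω (h x) := funext (hT2 ω)
    rw [this]
    simp only [dd_comp, hh]
    have hm : Measurable fun x => dd (φ ω) x θ :=
      hF.measurable_dd.comp (f := fun x : Eucl (d + 1) => ((ω, x), θ)) (by fun_prop)
    exact h.measurePreserving.lintegral_comp hm
  rw [e1, ← lintegral_const_mul' _ _ enorm_ne_top]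
  congr 1
  ext ω
  conv_lhs => rw [hvθ]
  rw [(hF.cls ω).lintegral_dd_smul, enorm_norm]

lemma Fam.avg [SFinite ν] {φ : Ω → Eucl (d + 1) → ℝ} (hF : Fam N ν φ) :
    gG d * ∫⁻ ω, ∫⁻ x, dd (φ ω) x (eL d) ∂volume ∂ν =
      (∫⁻ ω, ∫⁻ x, ‖fderiv ℝ (φ ω) x‖ₑ ∂volume ∂ν) * gS d := by
  have hm := hF.measurable_dd
  have e0 : ∀ v, ∫⁻ ω, ∫⁻ x, dd (φ ω) x v ∂volume ∂ν =
      ∫⁻ p : Ω × Eucl (d + 1), dd (φ p.1) p.2 v ∂(ν.prod volume) := by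
    intro v
    rw [lintegral_prod]
    exact (hm.comp (f := fun p : Ω × Eucl (d + 1) => (p, v)) (by fun_prop)).aemeasurable
  have e1 : gG d * ∫⁻ ω, ∫⁻ x, dd (φ ω) x (eL d) ∂volume ∂ν =
      ∫⁻ v : Eucl (d + 1), ∫⁻ p : Ω × Eucl (d + 1), dd (φ p.1) p.2 v * gw v ∂(ν.prod volume) := by
    have hm1 : Measurable fun v : Eucl (d + 1) => ‖v‖ₑ * gw v :=
      (by fun_prop : Measurable fun v : Eucl (d + 1) => ‖v‖ₑ).mul measurable_gw
    rw [gG, ← lintegral_mul_const _ hm1]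
    congr 1
    ext v
    rw [lintegral_mul_const' (gw v) _ ENNReal.ofReal_ne_top, ← e0, hF.dir_eq v]
    ring
  have hm2 : Measurable fun q : (Ω × Eucl (d + 1)) × Eucl (d + 1) =>
      dd (φ q.1.1) q.1.2 q.2 * gw q.2 := hm.mul (measurable_gw.comp measurable_snd)
  rw [e1, lintegral_lintegral_swap (f := fun v (p : Ω × Eucl (d + 1)) => dd (φ p.1) p.2 v * gw v)
    (μ := volume) (ν := ν.prod volume) (hm2.comp measurable_swap).aemeasurable, lintegral_prod]
  · rw [← lintegral_mul_const' _ _ (by rw [gS_eq]; exact ENNReal.ofReal_ne_top)]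
    congr 1
    ext ω
    rw [← lintegral_mul_const' _ _ (by rw [gS_eq]; exact ENNReal.ofReal_ne_top)]
    apply lintegral_congr_ae
    filter_upwards [(hF.cls ω).ae_diff] with x hx
    simp only [dd_eq hx]
    exact avg_functional _
  · exact (hm2.lintegral_prod_right').aemeasurable

lemma Fam.step [SFinite ν] (hN : 0 ≤ N) {φ : Ω → Eucl (d + 1) → ℝ} (hF : Fam N ν φ) :
    ENNReal.ofReal (ballVol (d + 1)) * ∫⁻ ω, ∫⁻ y, ENNReal.ofReal (proj (φ ω) y) ∂volume ∂ν ≤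
      ENNReal.ofReal ((N + (d + 1)) / (d + 1)) * (ENNReal.ofReal (ballVol d) *
        ∫⁻ ω, ∫⁻ x, ENNReal.ofReal (φ ω x) ∂volume ∂ν) := by
  set J0 := ∫⁻ ω, ∫⁻ y, ENNReal.ofReal (proj (φ ω) y) ∂volume ∂ν
  set J1 := ∫⁻ ω, ∫⁻ x, ENNReal.ofReal (φ ω x) ∂volume ∂ν
  set A := ∫⁻ ω, ∫⁻ x, dd (φ ω) x (eL d) ∂volume ∂ν
  have h1 : 2 * J0 ≤ A := by
    rw [← lintegral_const_mul' _ _ (by simp)]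
    refine lintegral_mono fun ω => ?_
    rw [(hF.cls ω).lintegral_dd]
    exact (hF.cls ω).lintegral_proj_le
  have h2 : ∫⁻ ω, ∫⁻ x, ‖fderiv ℝ (φ ω) x‖ₑ ∂volume ∂ν ≤ ENNReal.ofReal (N + (d + 1)) * J1 := by
    rw [← lintegral_const_mul' _ _ ENNReal.ofReal_ne_top]
    refine lintegral_mono fun ω => (hF.cls ω).lintegral_fderiv_le.trans (le_of_eq ?_)
    rw [ENNReal.ofReal_mul (by positivity), ofReal_integral_eq_lintegral_ofReal (hF.cls ω).int
      (Eventually.of_forall (hF.cls ω).nonneg)]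
    push_cast
    rfl
  have h3 := hF.avg
  have hc := const_rel d
  have hb := ballVol_pos (d + 1)
  have hb0 := ballVol_pos d
  have hG0 : gS d ≠ 0 := by
    rw [gS_eq]
    have := Real.pi_pos
    simp only [ne_eq, ENNReal.ofReal_eq_zero, not_le]
    positivity
  have hGt : gS d ≠ ⊤ := by rw [gS_eq]; exact ENNReal.ofReal_ne_top
  have h4 : gS d * (ENNReal.ofReal ((d : ℝ) + 1) * (ENNReal.ofReal (ballVol (d + 1)) * J0)) ≤
      gS d * (ENNReal.ofReal (N + (d + 1)) * (ENNReal.ofReal (ballVol d) * J1)) := by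
    calc gS d * (ENNReal.ofReal ((d : ℝ) + 1) * (ENNReal.ofReal (ballVol (d + 1)) * J0))
        = (ENNReal.ofReal ((d + 1) * ballVol (d + 1)) * gS d) * J0 := by
          rw [ENNReal.ofReal_mul (by positivity)]; ring
      _ = ENNReal.ofReal (ballVol d) * (gG d * (2 * J0)) := by rw [hc]; ring
      _ ≤ ENNReal.ofReal (ballVol d) * (gG d * A) := by gcongr
      _ ≤ ENNReal.ofReal (ballVol d) * ((ENNReal.ofReal (N + (d + 1)) * J1) * gS d) := by
          rw [h3]; gcongr
      _ = _ := by ring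
  rw [ENNReal.mul_le_mul_iff_right hG0 hGt] at h4
  have h5 : ENNReal.ofReal (N + (d + 1)) =
      ENNReal.ofReal ((d : ℝ) + 1) * ENNReal.ofReal ((N + (d + 1)) / (d + 1)) := by
    rw [← ENNReal.ofReal_mul (by positivity)]
    congr 1
    field_simp
  rw [h5, mul_assoc] at h4
  rwa [ENNReal.mul_le_mul_iff_right (by
    simp only [ne_eq, ENNReal.ofReal_eq_zero, not_le]; positivity) ENNReal.ofReal_ne_top] at h4

lemma Fam.proj {φ : Ω → Eucl (d + 1) → ℝ} (hF : Fam N ν φ) : Fam N ν (fun ω => proj (φ ω)) := by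
  refine ⟨fun ω => (hF.cls ω).proj, ?_, fun h => ?_⟩
  · have e : ∀ p : Ω × Eucl d, _root_.proj (φ p.1) p.2 = ⨆ q : ℚ, φ p.1 (sn p.2 q) := by
      intro p
      have hcont : Continuous fun r : ℝ => φ p.1 (sn p.2 r) :=
        (hF.cls p.1).continuous.comp (continuous_sn.comp (by fun_prop : Continuous fun r : ℝ => (p.2, r)))
      have hb := (hF.cls p.1).bddAbove p.2
      have hbq : BddAbove (range fun q : ℚ => φ p.1 (sn p.2 q)) :=
        hb.mono (by rintro _ ⟨q, rfl⟩; exact ⟨(q : ℝ), rfl⟩)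
      apply le_antisymm
      · refine ciSup_le fun r => ?_
        have hcl : IsClosed {r : ℝ | φ p.1 (sn p.2 r) ≤ ⨆ q : ℚ, φ p.1 (sn p.2 q)} :=
          isClosed_le hcont continuous_const
        have hd : Dense (range ((↑) : ℚ → ℝ)) := Rat.isDenseEmbedding_coe_real.dense
        have : closure (range ((↑) : ℚ → ℝ)) ⊆ _ := hcl.closure_subset_iff.2 (by
          rintro _ ⟨q, rfl⟩
          exact le_ciSup hbq q)
        exact this (hd r)
      · exact ciSup_le fun q => le_ciSup hb (q : ℝ)
    simp only [e]
    refine Measurable.iSup fun q => ?_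
    exact hF.meas.comp (f := fun p : Ω × Eucl d => (p.1, sn p.2 (q : ℝ)))
      (measurable_fst.prodMk (measurable_sn.comp (by fun_prop :
        Measurable fun p : Ω × Eucl d => (p.2, (q : ℝ)))))
  · obtain ⟨T, hT, hT2⟩ := hF.inv (extI h)
    refine ⟨T, hT, fun ω y => ?_⟩
    have : φ (T ω) = fun x => φ ω (extI h x) := funext (hT2 ω)
    show _root_.proj (φ (T ω)) y = _root_.proj (φ ω) (h y)
    rw [this, proj_comp_ext]

/-- Iterated projection. -/
def projIter (k : ℕ) : (m : ℕ) → (Eucl (k + m) → ℝ) → Eucl k → ℝ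
  | 0, φ => φ
  | m + 1, φ => projIter k m (proj (d := k + m) φ)

lemma Fam.iter [SFinite ν] (hN : 0 ≤ N) (k m : ℕ) (φ : Ω → Eucl (k + m) → ℝ) (hF : Fam N ν φ) :
    ENNReal.ofReal (ballVol (k + m)) *
      ∫⁻ ω, ∫⁻ y, ENNReal.ofReal (projIter k m (φ ω) y) ∂volume ∂ν ≤
    ENNReal.ofReal (∏ j ∈ Finset.Icc (k + 1) (k + m), ((N + j) / j)) *
      (ENNReal.ofReal (ballVol k) * ∫⁻ ω, ∫⁻ x, ENNReal.ofReal (φ ω x) ∂volume ∂ν) := by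
  induction m with
  | zero => simp [projIter]
  | succ m ih =>
    have h1 := hF.step (d := k + m) hN
    have h2 := ih (fun ω => _root_.proj (d := k + m) (φ ω)) (Fam.proj (d := k + m) hF)
    set b0 := ENNReal.ofReal (ballVol (k + m)) with hb0
    have hb0' : b0 ≠ 0 := by
      simp only [hb0, ne_eq, ENNReal.ofReal_eq_zero, not_le]; exact ballVol_pos _
    have hbt : b0 ≠ ⊤ := ENNReal.ofReal_ne_top
    have hp : ∏ j ∈ Finset.Icc (k + 1) (k + (m + 1)), ((N + (j : ℝ)) / j) =
        (∏ j ∈ Finset.Icc (k + 1) (k + m), ((N + (j : ℝ)) / j)) *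
          ((N + ((k + m + 1 : ℕ) : ℝ)) / ((k + m + 1 : ℕ) : ℝ)) :=
      Finset.prod_Icc_succ_top (by show k + 1 ≤ k + m + 1; omega) _
    rw [hp, ENNReal.ofReal_mul (Finset.prod_nonneg fun j _ => by positivity)]
    rw [← ENNReal.mul_le_mul_iff_right hb0' hbt]
    set Q := ENNReal.ofReal (∏ j ∈ Finset.Icc (k + 1) (k + m), ((N + j) / j))
    push_cast at h1 ⊢
    set R := ENNReal.ofReal ((N + (k + m + 1 : ℝ)) / (k + m + 1))
    set J0 := ∫⁻ ω, ∫⁻ y, ENNReal.ofReal (projIter k (m + 1) (φ ω) y) ∂volume ∂ν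
    set J1 := ∫⁻ ω, ∫⁻ y, ENNReal.ofReal (_root_.proj (d := k + m) (φ ω) y) ∂volume ∂ν
    set J2 := ∫⁻ ω, ∫⁻ x, ENNReal.ofReal (φ ω x) ∂volume ∂ν
    set b1 := ENNReal.ofReal (ballVol (k + m + 1))
    set bk := ENNReal.ofReal (ballVol k)
    calc b0 * (b1 * J0) = b1 * (b0 * J0) := by ring
      _ ≤ b1 * (Q * (bk * J1)) := mul_le_mul' le_rfl h2
      _ = Q * bk * (b1 * J1) := by ring
      _ ≤ Q * bk * (R * (b0 * J2)) := mul_le_mul' le_rfl h1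
      _ = _ := by ring

end

/-! ### The orthogonal group -/

section
open Filter Topology Set

instance og_borel (n : ℕ) : BorelSpace (OG n) := ⟨rfl⟩

instance mat_second (n : ℕ) : SecondCountableTopology (Matrix (Fin n) (Fin n) ℝ) :=
  inferInstanceAs (SecondCountableTopology (Fin n → Fin n → ℝ))

instance og_second (n : ℕ) : SecondCountableTopology (OG n) :=
  TopologicalSpace.Subtype.secondCountableTopology _

instance og_compact (n : ℕ) : CompactSpace (OG n) := by
  refine isCompact_iff_compactSpace.1 ?_
  have hc : IsClosed ((Matrix.orthogonalGroup (Fin n) ℝ : Submonoid _) : Set (Matrix (Fin n) (Fin n) ℝ)) :=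
    isClosed_unitary
  have hK : IsCompact (Set.pi univ fun _ : Fin n => Set.pi univ fun _ : Fin n => Icc (-1 : ℝ) 1) :=
    isCompact_univ_pi fun _ => isCompact_univ_pi fun _ => isCompact_Icc
  refine IsCompact.of_isClosed_subset (X := Matrix (Fin n) (Fin n) ℝ) hK hc ?_
  intro U hU i _ j _
  have := entry_norm_bound_of_unitary (𝕜 := ℝ) hU i j
  rw [Real.norm_eq_abs, abs_le] at this
  exact this

lemma og_right (n : ℕ) (ν : Measure (OG n)) [IsProbabilityMeasure ν] [ν.IsMulLeftInvariant]
    (g : OG n) : MeasurePreserving (fun x => x * g) ν ν := by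
  have hm : Measurable fun x : OG n => x * g := measurable_mul_const g
  refine ⟨hm, ?_⟩
  have hH : ν.IsHaarMeasure :=
    Measure.isHaarMeasure_of_isCompact_nonempty_interior ν univ isCompact_univ (by simp)
      (by simp) (by simp)
  have hp : IsProbabilityMeasure (ν.map (· * g)) := Measure.isProbabilityMeasure_map hm.aemeasurable
  have h1 := Measure.isMulInvariant_eq_smul_of_compactSpace (ν.map (· * g)) ν
  have h2 := congrArg (fun μ => μ univ) h1
  simp only [measure_univ, Measure.smul_apply] at h2
  have h3 : (ν.map (· * g)).haarScalarFactor ν = 1 := by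
    have : (((ν.map (· * g)).haarScalarFactor ν : NNReal) : ENNReal) = 1 := by
      rw [h2]; simp [ENNReal.smul_def]
    exact_mod_cast this
  rw [h3, one_smul] at h1
  exact h1

/-- The action of an orthogonal matrix as a linear isometry. -/
def ogI {n : ℕ} (g : OG n) : Eucl n ≃ₗᵢ[ℝ] Eucl n :=
  (LinearMap.isometryOfInner (Matrix.toEuclideanLin (g : Matrix (Fin n) (Fin n) ℝ)) (by
    intro x y
    rw [← LinearMap.adjoint_inner_right, ← Matrix.toEuclideanLin_conjTranspose_eq_adjoint]
    congr 1
    have h := (Matrix.mem_orthogonalGroup_iff' (Fin n) ℝ).1 g.2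
    ext i
    simp only [Matrix.ofLp_toEuclideanLin_apply, Matrix.mulVec_mulVec,
      Matrix.conjTranspose_eq_transpose_of_trivial, h, Matrix.one_mulVec])).toLinearIsometryEquiv rfl

lemma ogI_apply {n : ℕ} (g : OG n) (x : Eucl n) :
    ogI g x = Matrix.toEuclideanLin (g : Matrix (Fin n) (Fin n) ℝ) x := rfl

lemma continuous_og (n : ℕ) : Continuous fun p : OG n × Eucl n => ogI p.1 p.2 := by
  have : (fun p : OG n × Eucl n => ogI p.1 p.2) =
      fun p => WithLp.toLp 2 (Matrix.mulVec (p.1 : Matrix (Fin n) (Fin n) ℝ) p.2.ofLp) := by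
    ext p i
    simp [ogI_apply, Matrix.ofLp_toEuclideanLin_apply]
  rw [this]
  refine (PiLp.continuous_toLp 2 _).comp ?_
  exact Continuous.matrix_mulVec (by fun_prop) (by fun_prop)

lemma ogI_surj {n : ℕ} (h : Eucl n ≃ₗᵢ[ℝ] Eucl n) : ∃ g : OG n, ∀ x, ogI g x = h x := by
  set A := Matrix.toEuclideanLin.symm h.toLinearEquiv.toLinearMap with hA
  have hA' : Matrix.toEuclideanLin A = h.toLinearEquiv.toLinearMap := by simp [hA]
  have hmem : A ∈ Matrix.orthogonalGroup (Fin n) ℝ := by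
    rw [Matrix.mem_orthogonalGroup_iff']
    apply Matrix.toEuclideanLin.injective
    refine LinearMap.ext fun x => ext_inner_right ℝ fun y => ?_
    have e : Matrix.toEuclideanLin (A.transpose * A) x =
        LinearMap.adjoint (Matrix.toEuclideanLin A) (Matrix.toEuclideanLin A x) := by
      rw [← Matrix.toEuclideanLin_conjTranspose_eq_adjoint]
      ext i
      simp only [Matrix.ofLp_toEuclideanLin_apply, Matrix.mulVec_mulVec,
        Matrix.conjTranspose_eq_transpose_of_trivial]
    have e1 : Matrix.toEuclideanLin (1 : Matrix (Fin n) (Fin n) ℝ) x = x := by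
      ext i
      simp only [Matrix.ofLp_toEuclideanLin_apply, Matrix.one_mulVec]
    rw [e, e1, LinearMap.adjoint_inner_left, hA']
    exact h.inner_map_map x y
  refine ⟨⟨A, hmem⟩, fun x => ?_⟩
  rw [ogI_apply, hA']
  rfl

lemma ogI_mul {n : ℕ} (g h : OG n) (x : Eucl n) : ogI (g * h) x = ogI g (ogI h x) := by
  ext i
  simp only [ogI_apply, Matrix.ofLp_toEuclideanLin_apply, Matrix.mulVec_mulVec]
  rfl

lemma Cls.comp_isom {N : ℝ} {d : ℕ} {φ : Eucl d → ℝ} (hφ : Cls N φ) (h : Eucl d ≃ₗᵢ[ℝ] Eucl d) :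
    Cls N (fun x => φ (h x)) := by
  obtain ⟨M, hM⟩ := hφ.bdd
  obtain ⟨L, hL⟩ := hφ.lip
  refine ⟨fun x => hφ.nonneg _, ⟨M, fun x => hM _⟩, ⟨L, ?_⟩, ?_, ?_⟩
  · have := hL.comp h.isometry.lipschitz
    rw [mul_one] at this
    exact this
  · exact (h.measurePreserving.integrable_comp_emb
      h.toHomeomorph.toMeasurableEquiv.measurableEmbedding).2 hφ.int
  · intro x v t hv h0 h1
    have := hφ.star (h x) (h v) t (by simpa using hv) h0 h1
    simpa using this

lemma top_fam {n : ℕ} {N : ℝ} {F : Eucl n → ℝ} (hF : Cls N F) (ν : Measure (OG n))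
    [IsProbabilityMeasure ν] [ν.IsMulLeftInvariant] :
    Fam N ν (fun g : OG n => fun x => F (ogI g x)) := by
  refine ⟨fun g => hF.comp_isom _, ?_, fun h => ?_⟩
  · exact (hF.continuous.comp (continuous_og n)).measurable
  · obtain ⟨g, hg⟩ := ogI_surj h
    refine ⟨fun x => x * g, og_right n ν g, fun ω x => ?_⟩
    simp only [ogI_mul, hg]

lemma top_integral {n : ℕ} {N : ℝ} {F : Eucl n → ℝ} (hF : Cls N F) (ν : Measure (OG n))
    [IsProbabilityMeasure ν] :
    ∫⁻ g, ∫⁻ x, ENNReal.ofReal (F (ogI g x)) ∂volume ∂ν = ENNReal.ofReal (∫ x, F x) := by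
  have : ∀ g : OG n, ∫⁻ x, ENNReal.ofReal (F (ogI g x)) = ENNReal.ofReal (∫ x, F x) := by
    intro g
    rw [ofReal_integral_eq_lintegral_ofReal hF.int (Eventually.of_forall hF.nonneg)]
    exact (ogI g).measurePreserving.lintegral_comp
      (f := fun x => ENNReal.ofReal (F x)) hF.continuous.measurable.ennreal_ofReal
  simp [this]

/-- First `k` coordinates. -/
def fstC (k m : ℕ) (w : Eucl (k + m)) : Eucl k := WithLp.toLp 2 (fun i => w (Fin.castAdd m i))

lemma le_projIter {N : ℝ} (k m : ℕ) (φ : Eucl (k + m) → ℝ) (h : Cls N φ) (w : Eucl (k + m)) :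
    φ w ≤ projIter k m φ (fstC k m w) := by
  induction m with
  | zero => exact le_of_eq rfl
  | succ m ih =>
    have h1 := h.le_proj (d := k + m) (ini (d := k + m) w) (w (Fin.last (k + m)))
    rw [sn_ini (d := k + m)] at h1
    have h2 := ih (proj (d := k + m) φ) (Cls.proj (d := k + m) h) (ini (d := k + m) w)
    exact h1.trans h2

end

/-! ### Boundedness and regularization -/

section
open Filter Topology Set

lemma logconcave_bdd {n : ℕ} {f : Eucl n → ℝ} (hf : MemQ0 f) : BddAbove (range f) := by
  obtain ⟨h0, hlc, -, hInt, hpos⟩ := hf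
  -- a superlevel set of positive measure
  have hK : ∃ ε : ℝ, 0 < ε ∧ volume {x | ε ≤ f x} ≠ 0 := by
    by_contra! hc
    have h1 : volume (⋃ m : ℕ, {x | 1 / ((m : ℝ) + 1) ≤ f x}) = 0 :=
      measure_iUnion_null fun m => hc _ (by positivity)
    have h2 : f =ᵐ[volume] 0 := by
      rw [Filter.EventuallyEq, ae_iff]
      refine measure_mono_null ?_ h1
      intro x hx
      have hx0 : 0 < f x := lt_of_le_of_ne (h0 x) (Ne.symm hx)
      obtain ⟨m, hm⟩ := exists_nat_one_div_lt hx0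
      exact mem_iUnion.2 ⟨m, hm.le⟩
    rw [integral_congr_ae h2] at hpos
    simp at hpos
  obtain ⟨ε, hε, hK0⟩ := hK
  set K := {x | ε ≤ f x} with hKdef
  have mk : ∀ c : ℝ, 0 < c → ENNReal.ofReal c * volume {x | c ≤ f x} ≤ ENNReal.ofReal (∫ x, f x) := by
    intro c hc
    rw [ofReal_integral_eq_lintegral_ofReal hInt (Eventually.of_forall h0)]
    refine le_trans (mul_le_mul' le_rfl (measure_mono ?_))
      (mul_meas_ge_le_lintegral₀ hInt.1.aemeasurable.ennreal_ofReal (ENNReal.ofReal c))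
    intro x hx
    exact ENNReal.ofReal_le_ofReal hx
  have hKt : volume K ≠ ⊤ := by
    intro htop
    have := mk ε hε
    rw [← hKdef, htop, ENNReal.mul_top (by simpa using hε)] at this
    simp at this
  set κ := (volume K).toReal with hκ
  have hκ0 : 0 < κ := ENNReal.toReal_pos hK0 hKt
  set I := ∫ x, f x
  have main : ∀ y, ∀ R : ℝ, 0 < R → R ≤ f y →
      (ε ^ (1 / 2 : ℝ) * R ^ (1 / 2 : ℝ)) * ((1 / 2 : ℝ) ^ n * κ) ≤ I := by
    intro y R hR hy
    set c := ε ^ (1 / 2 : ℝ) * R ^ (1 / 2 : ℝ) with hc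
    have hcp : 0 < c := by positivity
    have hsub : (AffineMap.homothety y (1 / 2 : ℝ)) '' K ⊆ {x | c ≤ f x} := by
      rintro _ ⟨x, hx, rfl⟩
      have e : AffineMap.homothety y (1 / 2 : ℝ) x = (1 / 2 : ℝ) • x + (1 - 1 / 2 : ℝ) • y := by
        rw [AffineMap.homothety_apply, vsub_eq_sub, vadd_eq_add]
        module
      rw [mem_setOf_eq, e]
      refine le_trans ?_ (hlc x y (1 / 2) (by norm_num) (by norm_num))
      rw [show (1 - 1 / 2 : ℝ) = 1 / 2 by norm_num]
      exact mul_le_mul (Real.rpow_le_rpow hε.le hx (by norm_num))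
        (Real.rpow_le_rpow hR.le hy (by norm_num)) (by positivity)
        (Real.rpow_nonneg (h0 _) _)
    have h1 := (mul_le_mul' le_rfl (measure_mono hsub)).trans (mk c hcp)
    rw [Measure.addHaar_image_homothety, finrank_euclideanSpace_fin,
      abs_of_pos (by positivity), ← ENNReal.ofReal_toReal hKt,
      ← ENNReal.ofReal_mul (by positivity), ← ENNReal.ofReal_mul (by positivity),
      ENNReal.ofReal_le_ofReal_iff hpos.le] at h1
    exact h1
  refine ⟨((I + 1) / (ε ^ (1 / 2 : ℝ) * ((1 / 2 : ℝ) ^ n * κ))) ^ 2, ?_⟩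
  rintro _ ⟨y, rfl⟩
  by_contra! hy
  set q := (I + 1) / (ε ^ (1 / 2 : ℝ) * ((1 / 2 : ℝ) ^ n * κ)) with hq
  have hq0 : 0 < q := by positivity
  have h2 := main y (q ^ 2) (by positivity) hy.le
  have h3 : (q ^ 2) ^ (1 / 2 : ℝ) = q := by
    rw [← Real.sqrt_eq_rpow, Real.sqrt_sq hq0.le]
  rw [h3] at h2
  have h4 : ε ^ (1 / 2 : ℝ) * q * ((1 / 2 : ℝ) ^ n * κ) = I + 1 := by
    have : ε ^ (1 / 2 : ℝ) ≠ 0 := by positivity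
    rw [hq]; field_simp
  linarith

lemma star_of_john {n : ℕ} {f : Eucl n → ℝ} (hf : MemQ0 f)
    (hv : ∀ x v : Eucl n, ‖v‖ ≤ 1 → Real.exp (-(n : ℝ)) * f x ≤ f v)
    (x v : Eucl n) (t : ℝ) (hv1 : ‖v‖ ≤ 1) (ht0 : 0 ≤ t) (ht1 : t ≤ 1) :
    Real.exp (-((n : ℝ) * t)) * f x ≤ f ((1 - t) • x + t • v) := by
  obtain ⟨h0, hlc, -, -, -⟩ := hf
  rcases ht0.eq_or_lt with rfl | ht0
  · simp
  rcases ht1.eq_or_lt with rfl | ht1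
  · simpa using hv x v hv1
  rw [add_comm]
  refine le_trans ?_ (hlc v x t ht0 ht1)
  have h1 : (Real.exp (-(n : ℝ)) * f x) ^ t ≤ f v ^ t :=
    Real.rpow_le_rpow (mul_nonneg (Real.exp_pos _).le (h0 x)) (hv x v hv1) ht0.le
  refine le_trans (le_of_eq ?_) (mul_le_mul_of_nonneg_right h1 (Real.rpow_nonneg (h0 x) _))
  rw [Real.mul_rpow (Real.exp_pos _).le (h0 x), ← Real.exp_mul, mul_assoc,
    ← Real.rpow_add' (h0 x) (by simp)]
  simp [neg_mul]

/-- Lipschitz regularization. -/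
def reg {n : ℕ} (l : ℝ) (f : Eucl n → ℝ) (x : Eucl n) : ℝ :=
  ⨆ y, f y * max 0 (1 - l * ‖x - y‖)

lemma reg_prop {n : ℕ} {N : ℝ} {f : Eucl n → ℝ} {M : ℝ} (h0 : ∀ x, 0 ≤ f x) (hM : ∀ x, f x ≤ M)
    (hInt : Integrable f)
    (hs : ∀ (x v : Eucl n) (t : ℝ), ‖v‖ ≤ 1 → 0 ≤ t → t ≤ 1 →
      Real.exp (-(N * t)) * f x ≤ f ((1 - t) • x + t • v))
    (t : ℝ) (ht0 : 0 < t) (ht1 : t < 1) :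
    Cls N (reg ((1 - t) / t) f) ∧ (∀ x, f x ≤ reg ((1 - t) / t) f x) ∧
      ∫ x, reg ((1 - t) / t) f x ≤ Real.exp (N * t) * ((1 - t) ^ n)⁻¹ * ∫ x, f x := by
  set l := (1 - t) / t with hl
  have h1t : 0 < 1 - t := by linarith
  have hl0 : 0 < l := by positivity
  have hM0 : 0 ≤ M := (h0 0).trans (hM 0)
  have hk1 : ∀ z : Eucl n, max 0 (1 - l * ‖z‖) ≤ 1 := fun z =>
    max_le zero_le_one (by nlinarith [norm_nonneg z])
  have hk0 : ∀ z : Eucl n, 0 ≤ max 0 (1 - l * ‖z‖) := fun z => le_max_left _ _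
  have hterm : ∀ x y, f y * max 0 (1 - l * ‖x - y‖) ≤ f y := fun x y =>
    mul_le_of_le_one_right (h0 y) (hk1 _)
  have hb : ∀ x, BddAbove (range fun y => f y * max 0 (1 - l * ‖x - y‖)) := by
    intro x
    refine ⟨M, ?_⟩
    rintro _ ⟨y, rfl⟩
    exact (hterm x y).trans (hM y)
  have hle : ∀ x y, f y * max 0 (1 - l * ‖x - y‖) ≤ reg l f x := fun x y => le_ciSup (hb x) y
  have hfF : ∀ x, f x ≤ reg l f x := by
    intro x
    simpa using hle x x
  have hnn : ∀ x, 0 ≤ reg l f x := fun x => (h0 x).trans (hfF x)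
  have hlip : LipschitzWith (l * M).toNNReal (reg l f) := by
    refine LipschitzWith.of_le_add_mul _ fun x x' => ciSup_le fun y => ?_
    rw [Real.coe_toNNReal _ (by positivity), dist_eq_norm]
    have h2 := hle x' y
    have h3 : max 0 (1 - l * ‖x - y‖) ≤ max 0 (1 - l * ‖x' - y‖) + l * ‖x - x'‖ := by
      have hn : ‖x' - y‖ ≤ ‖x - x'‖ + ‖x - y‖ := by
        have : x' - y = -(x - x') + (x - y) := by abel
        rw [this]
        exact (norm_add_le _ _).trans (by rw [norm_neg])
      have hp : 0 ≤ l * ‖x - x'‖ := by positivity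
      apply max_le
      · linarith [hk0 (x' - y)]
      · have := le_max_right 0 (1 - l * ‖x' - y‖)
        nlinarith
    have h4 : f y * (l * ‖x - x'‖) ≤ M * (l * ‖x - x'‖) :=
      mul_le_mul_of_nonneg_right (hM y) (by positivity)
    have h5 := mul_le_mul_of_nonneg_left h3 (h0 y)
    nlinarith
  have hstar : ∀ (x v : Eucl n) (s : ℝ), ‖v‖ ≤ 1 → 0 ≤ s → s ≤ 1 →
      Real.exp (-(N * s)) * reg l f x ≤ reg l f ((1 - s) • x + s • v) := by
    intro x v s hv hs0 hs1
    rw [reg, Real.mul_iSup_of_nonneg (Real.exp_pos _).le]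
    refine ciSup_le fun y => ?_
    refine le_trans ?_ (hle _ ((1 - s) • y + s • v))
    rw [← mul_assoc]
    have e : (1 - s) • x + s • v - ((1 - s) • y + s • v) = (1 - s) • (x - y) := by module
    rw [e, norm_smul, Real.norm_of_nonneg (by linarith)]
    refine mul_le_mul (hs y v s hv hs0 hs1) ?_ (hk0 _) (h0 _)
    apply max_le_max le_rfl
    have : (1 - s) * ‖x - y‖ ≤ ‖x - y‖ := mul_le_of_le_one_left (norm_nonneg _) (by linarith)
    nlinarith
  have hup : ∀ x, reg l f x ≤ Real.exp (N * t) * f ((1 - t) • x) := by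
    intro x
    refine ciSup_le fun y => ?_
    by_cases hxy : l * ‖x - y‖ ≤ 1
    · refine (hterm x y).trans ?_
      have h2 := hs y (l • (x - y)) t (by rwa [norm_smul, Real.norm_of_nonneg hl0.le]) ht0.le ht1.le
      have e : (1 - t) • y + t • l • (x - y) = (1 - t) • x := by
        rw [smul_smul, hl, mul_div_cancel₀ _ ht0.ne']
        module
      rw [e] at h2
      calc f y = Real.exp (N * t) * (Real.exp (-(N * t)) * f y) := by
            rw [← mul_assoc, ← Real.exp_add]; simp
        _ ≤ _ := mul_le_mul_of_nonneg_left h2 (Real.exp_pos _).le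
    · rw [max_eq_left (by linarith), mul_zero]
      exact mul_nonneg (Real.exp_pos _).le (h0 _)
  have hInt2 : Integrable fun x => Real.exp (N * t) * f ((1 - t) • x) :=
    (hInt.comp_smul h1t.ne').const_mul _
  have hInt3 : Integrable (reg l f) := by
    refine hInt2.mono' hlip.continuous.aestronglyMeasurable (Eventually.of_forall fun x => ?_)
    rw [Real.norm_of_nonneg (hnn x)]
    exact hup x
  refine ⟨⟨hnn, ⟨M, fun x => ciSup_le fun y => (hterm x y).trans (hM y)⟩, ⟨_, hlip⟩, hInt3, hstar⟩,
    hfF, ?_⟩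
  refine (integral_mono hInt3 hInt2 hup).trans (le_of_eq ?_)
  rw [integral_const_mul, Measure.integral_comp_smul, finrank_euclideanSpace_fin, smul_eq_mul,
    abs_of_pos (by positivity), mul_assoc]

end

/-! ### Coordinate subspaces and the conclusion -/

section
open Filter Topology Set

lemma std_zero {n k : ℕ} {y : Eucl n} (hy : y ∈ stdSubspace n k) (i : Fin n) (hi : k ≤ i) :
    y i = 0 := by
  induction hy using Submodule.span_induction with
  | mem x hx =>
    obtain ⟨j, hj, rfl⟩ := hx
    have : i ≠ j := by rintro rfl; omega
    simp [this]
  | zero => simp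
  | add x y _ _ hx hy => simp [hx, hy]
  | smul c x _ hx => simp [hx]

lemma std_mem {n k : ℕ} {y : Eucl n} (hy : ∀ i : Fin n, k ≤ i → y i = 0) :
    y ∈ stdSubspace n k := by
  have e : y = ∑ i, y i • EuclideanSpace.single i (1 : ℝ) := by
    ext j
    simp [Finset.sum_apply, Pi.single_apply]
  rw [e]
  refine Submodule.sum_mem _ fun i _ => ?_
  by_cases hi : k ≤ i
  · rw [hy i hi, zero_smul]; exact Submodule.zero_mem _
  · exact Submodule.smul_mem _ _ (Submodule.subset_span ⟨i, by omega, rfl⟩)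

lemma std_orth {n k : ℕ} {z : Eucl n} (hz : z ∈ (stdSubspace n k)ᗮ) (i : Fin n) (hi : (i : ℕ) < k) :
    z i = 0 := by
  have := (Submodule.mem_orthogonal _ _).1 hz (EuclideanSpace.single i 1)
    (Submodule.subset_span ⟨i, hi, rfl⟩)
  rw [EuclideanSpace.inner_single_left] at this
  simpa using this

lemma fstC_add {k m : ℕ} {y z : Eucl (k + m)} (hz : z ∈ (stdSubspace (k + m) k)ᗮ) :
    fstC k m (y + z) = fstC k m y := by
  ext i
  have := std_orth hz (Fin.castAdd m i) (by simp)
  simp [fstC, this]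

lemma exists_stdI (k m : ℕ) : ∃ e : stdSubspace (k + m) k ≃ₗᵢ[ℝ] Eucl k,
    ∀ y, e y = fstC k m y := by
  let L : stdSubspace (k + m) k →ₗ[ℝ] Eucl k :=
    { toFun := fun y => fstC k m y
      map_add' := fun x y => by ext i; simp [fstC]
      map_smul' := fun c x => by ext i; simp [fstC] }
  have hL : ∀ y, ‖L y‖ = ‖y‖ := by
    intro y
    have h2 : ‖L y‖ ^ 2 = ‖y‖ ^ 2 := by
      rw [Submodule.coe_norm, EuclideanSpace.norm_sq_eq, EuclideanSpace.norm_sq_eq,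
        Fin.sum_univ_add]
      have : ∀ i : Fin m, (y : Eucl (k + m)) (Fin.natAdd k i) = 0 := fun i =>
        std_zero y.2 _ (by simp)
      simp [this, L, fstC]
    exact (sq_eq_sq₀ (norm_nonneg _) (norm_nonneg _)).1 h2
  let I : stdSubspace (k + m) k →ₗᵢ[ℝ] Eucl k := ⟨L, hL⟩
  have hs : Function.Surjective I := by
    intro x
    have hm : (WithLp.toLp 2 (Fin.addCases (motive := fun _ => ℝ) x.ofLp (fun _ : Fin m => (0 : ℝ))) :
        Eucl (k + m)) ∈ stdSubspace (k + m) k := by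
      refine std_mem fun i hi => ?_
      induction i using Fin.addCases with
      | left i => simp at hi; omega
      | right i => simp
    refine ⟨⟨_, hm⟩, ?_⟩
    ext i
    simp [I, L, fstC]
  exact ⟨LinearIsometryEquiv.ofSurjective I hs, fun y => rfl⟩

lemma Cls.projIter {N : ℝ} (k m : ℕ) (φ : Eucl (k + m) → ℝ) (h : Cls N φ) :
    Cls N (projIter k m φ) := by
  induction m with
  | zero => exact h
  | succ m ih => exact ih _ (Cls.proj (d := k + m) h)

lemma querm_core (k m : ℕ) {f F : Eucl (k + m) → ℝ} {N : ℝ} (hN : 0 ≤ N) (h0 : ∀ x, 0 ≤ f x)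
    (hF : Cls N F) (hfF : ∀ x, f x ≤ F x)
    (ν : Measure (OG (k + m))) [IsProbabilityMeasure ν] [ν.IsMulLeftInvariant] :
    (ballVol (k + m) / ballVol k) * ∫ g : OG (k + m), (∫ y : stdSubspace (k + m) k,
        ⨆ z : (stdSubspace (k + m) k)ᗮ, f ((Matrix.toEuclideanLin
          (g : Matrix (Fin (k + m)) (Fin (k + m)) ℝ)) ((y : Eucl (k + m)) + (z : Eucl (k + m))))) ∂ν ≤
      (∏ j ∈ Finset.Icc (k + 1) (k + m), ((N + j) / j)) * ∫ x, F x := by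
  have hb := ballVol_pos k
  have hb1 := ballVol_pos (k + m)
  have hI : 0 ≤ ∫ x, F x := integral_nonneg hF.nonneg
  have hP : 0 ≤ ∏ j ∈ Finset.Icc (k + 1) (k + m), ((N + (j : ℝ)) / j) :=
    Finset.prod_nonneg fun j _ => by positivity
  have hit := (top_fam hF ν).iter hN k m
  rw [top_integral hF ν] at hit
  set A := ∫ g : OG (k + m), (∫ y : stdSubspace (k + m) k,
        ⨆ z : (stdSubspace (k + m) k)ᗮ, f ((Matrix.toEuclideanLin
          (g : Matrix (Fin (k + m)) (Fin (k + m)) ℝ)) ((y : Eucl (k + m)) + (z : Eucl (k + m))))) ∂ν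
    with hA
  obtain ⟨e, he⟩ := exists_stdI k m
  have h1 : ENNReal.ofReal A ≤
      ∫⁻ g, ∫⁻ y, ENNReal.ofReal (projIter k m (fun x => F (ogI g x)) y) ∂volume ∂ν := by
    refine (Real.ofReal_le_enorm A).trans ?_
    refine (enorm_integral_le_lintegral_enorm _).trans (lintegral_mono fun g => ?_)
    refine (enorm_integral_le_lintegral_enorm _).trans ?_
    have hcl := hF.comp_isom (ogI g)
    have hcp := Cls.projIter k m _ hcl
    rw [← e.measurePreserving.lintegral_comp hcp.continuous.measurable.ennreal_ofReal]
    refine lintegral_mono fun y => ?_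
    rw [Real.enorm_of_nonneg (Real.iSup_nonneg fun z => h0 _)]
    refine ENNReal.ofReal_le_ofReal (ciSup_le fun z => ?_)
    rw [← ogI_apply, he, ← fstC_add (y := y) z.2]
    exact (hfF _).trans (le_projIter k m _ hcl _)
  have h2 := (mul_le_mul' (le_refl (ENNReal.ofReal (ballVol (k + m)))) h1).trans hit
  rw [← ENNReal.ofReal_mul hb1.le, ← ENNReal.ofReal_mul hb.le, ← ENNReal.ofReal_mul hP,
    ENNReal.ofReal_le_ofReal_iff (by positivity)] at h2
  rw [div_mul_eq_mul_div, div_le_iff₀ hb]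
  linarith

lemma querm_core_zero (m : ℕ) {f F : Eucl (0 + m) → ℝ} {N : ℝ} (hN : 0 ≤ N)
    (hF : Cls N F) (hfF : ∀ x, f x ≤ F x)
    (ν : Measure (OG (0 + m))) [IsProbabilityMeasure ν] [ν.IsMulLeftInvariant] :
    ballVol (0 + m) * supNorm f ≤
      (∏ j ∈ Finset.Icc (0 + 1) (0 + m), ((N + j) / j)) * ∫ x, F x := by
  have hb1 := ballVol_pos (0 + m)
  have hI : 0 ≤ ∫ x, F x := integral_nonneg hF.nonneg
  have hP : 0 ≤ ∏ j ∈ Finset.Icc (0 + 1) (0 + m), ((N + (j : ℝ)) / j) :=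
    Finset.prod_nonneg fun j _ => by positivity
  have hit := (top_fam hF ν).iter hN 0 m
  rw [top_integral hF ν] at hit
  have hb0 : ballVol 0 = 1 := by
    have : Metric.closedBall (0 : Eucl 0) 1 = univ := by
      ext x; simp [Subsingleton.elim x 0]
    rw [ballVol, this, volume_zero]; simp
  have h1 : ENNReal.ofReal (supNorm f) ≤
      ∫⁻ g, ∫⁻ y, ENNReal.ofReal (projIter 0 m (fun x => F (ogI g x)) y) ∂volume ∂ν := by
    have : ∀ g : OG (0 + m), ENNReal.ofReal (supNorm f) ≤
        ∫⁻ y, ENNReal.ofReal (projIter 0 m (fun x => F (ogI g x)) y) := by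
      intro g
      have h3 : ∫⁻ _ : Eucl 0, ENNReal.ofReal (supNorm f) = ENNReal.ofReal (supNorm f) := by
        rw [lintegral_const, volume_zero, mul_one]
      rw [← h3]
      refine lintegral_mono fun y => ENNReal.ofReal_le_ofReal (ciSup_le fun x => ?_)
      have h4 := le_projIter 0 m _ (hF.comp_isom (ogI g)) ((ogI g).symm x)
      simp only [LinearIsometryEquiv.apply_symm_apply] at h4
      rw [Subsingleton.elim y (fstC 0 m ((ogI g).symm x))]
      exact (hfF x).trans h4
    have h5 := lintegral_mono (μ := ν) this
    rwa [lintegral_const, measure_univ, mul_one] at h5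
  have h2 := (mul_le_mul' (le_refl (ENNReal.ofReal (ballVol (0 + m)))) h1).trans hit
  rw [hb0, ENNReal.ofReal_one, one_mul, ← ENNReal.ofReal_mul hb1.le, ← ENNReal.ofReal_mul hP,
    ENNReal.ofReal_le_ofReal_iff (by positivity)] at h2
  exact h2

lemma querm_le_F (k m : ℕ) (hm : 1 ≤ m) {f F : Eucl (k + m) → ℝ} {N : ℝ} (hN : 0 ≤ N)
    (h0 : ∀ x, 0 ≤ f x) (hF : Cls N F) (hfF : ∀ x, f x ≤ F x)
    (ν : Measure (OG (k + m))) [IsProbabilityMeasure ν] [ν.IsMulLeftInvariant] :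
    querm ν f (k + m - k) ≤
      (∏ j ∈ Finset.Icc (k + 1) (k + m), ((N + j) / j)) * ∫ x, F x := by
  rw [Nat.add_sub_cancel_left, querm]
  split_ifs with h
  · obtain rfl : k = 0 := by omega
    exact querm_core_zero m hN hF hfF ν
  · have key : ∀ k' : ℕ, k' = k → (ballVol (k + m) / ballVol k') * ∫ g : OG (k + m),
        (∫ y : stdSubspace (k + m) k',
          ⨆ z : (stdSubspace (k + m) k')ᗮ, f ((Matrix.toEuclideanLin
            (g : Matrix (Fin (k + m)) (Fin (k + m)) ℝ))
              ((y : Eucl (k + m)) + (z : Eucl (k + m))))) ∂ν ≤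
        (∏ j ∈ Finset.Icc (k + 1) (k + m), ((N + j) / j)) * ∫ x, F x := by
      rintro _ rfl
      exact querm_core _ m hN h0 hF hfF ν
    exact key _ (by omega)

lemma limit_aux (n : ℕ) (W C : ℝ)
    (h : ∀ t : ℝ, 0 < t → t < 1 → W ≤ Real.exp (n * t) * ((1 - t) ^ n)⁻¹ * C) : W ≤ C := by
  have hc : ContinuousAt (fun t : ℝ => Real.exp (n * t) * ((1 - t) ^ n)⁻¹ * C) 0 := by
    refine ContinuousAt.mul (ContinuousAt.mul (by fun_prop) (ContinuousAt.inv₀ (by fun_prop) (by simp)))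
      (by fun_prop)
  have ht : Tendsto (fun t : ℝ => Real.exp (n * t) * ((1 - t) ^ n)⁻¹ * C) (𝓝[>] 0) (𝓝 C) := by
    have := hc.tendsto.mono_left (nhdsWithin_le_nhds (s := Ioi 0))
    simpa using this
  refine ge_of_tendsto ht ?_
  filter_upwards [Ioo_mem_nhdsGT (zero_lt_one : (0 : ℝ) < 1)] with t ht
  exact h t ht.1 ht.2

end

/-- **Corollary 4.2**: for `f ∈ Q₀ⁿ` in John's position,
`W_{n−k}(f) ≤ b_{n,k} · ‖f‖₁` where `b_{n,k} = ∏_{j=k+1}^n (n+j)/j`. -/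
theorem querm_le_of_john_position (n k : ℕ) (hn : 1 ≤ n) (hk : k ≤ n - 1)
    (f : Eucl n → ℝ) (hf : MemQ0 f)
    (hJohn : ∃ a : ℝ, a ∈ Set.Icc (Real.exp (-(n : ℝ))) 1 ∧
      ∀ x : Eucl n,
        a * supNorm f * (Metric.closedBall (0 : Eucl n) 1).indicator
          (fun _ => (1 : ℝ)) x ≤ f x)
    (ν : Measure (OG n)) [IsProbabilityMeasure ν] [ν.IsMulLeftInvariant] :
    querm ν f (n - k) ≤
      (∏ j ∈ Finset.Icc (k + 1) n, (((n : ℝ) + j) / j)) * ∫ x, f x := by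

  obtain ⟨m, rfl⟩ : ∃ m, n = k + m := ⟨n - k, by omega⟩
  have hm : 1 ≤ m := by omega
  have hbdd := logconcave_bdd hf
  have hM : ∀ x, f x ≤ supNorm f := fun x => le_ciSup hbdd x
  have h0 := hf.1
  have hM0 : 0 ≤ supNorm f := (h0 0).trans (hM 0)
  obtain ⟨a, ⟨ha, -⟩, haf⟩ := hJohn
  have hv : ∀ x v : Eucl (k + m), ‖v‖ ≤ 1 → Real.exp (-((k + m : ℕ) : ℝ)) * f x ≤ f v := by
    intro x v hv
    have h1 := haf v
    rw [Set.indicator_of_mem (by simpa using hv), mul_one] at h1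
    refine le_trans ?_ h1
    exact mul_le_mul ha (hM x) (h0 x) ((Real.exp_pos _).le.trans ha)
  refine limit_aux (k + m) _ _ fun t ht0 ht1 => ?_
  obtain ⟨hc, hle, hI⟩ := reg_prop h0 hM hf.2.2.2.1 (star_of_john hf hv) t ht0 ht1
  refine (querm_le_F k m hm (Nat.cast_nonneg _) h0 hc hle ν).trans ?_
  refine (mul_le_mul_of_nonneg_left hI (Finset.prod_nonneg fun j _ => by positivity)).trans
    (le_of_eq ?_)
  ring
end
end

section
/- Let n ≥ 2, let 1 ≤ k ≤ n−1, and let f₁, f₂ ∈ Q₀ⁿ. Assume the Shephard condition: ‖P_H f₁‖_{L¹(H)} ≤ ‖P_H f₂‖_{L¹(H)} for every k-dimensional linear subspace H ⊆ ℝⁿ. Then ‖f₁‖_{n/k} ≤ (16·√n)^{n−k} · ‖f₂‖₁^{k/n} · ‖f₂‖_∞^{(n−k)/n}. -/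
open MeasureTheory

noncomputable section

namespace FShep
open scoped ENNReal

lemma lw_marginal {ι J : Type*} [Fintype ι] [DecidableEq ι] [Fintype J]
    (S : J → Finset ι) (p : ℝ) (hp0 : 0 ≤ p)
    (hp : ∀ i, ∑ _j ∈ Finset.univ.filter (fun j => i ∈ S j), p = 1)
    (G : J → (ι → ℝ) → ℝ≥0∞) (hG : ∀ j, Measurable (G j))
    (hdep : ∀ j x i r, i ∉ S j → G j (Function.update x i r) = G j x) (T : Finset ι) :
    ∀ x, (∫⋯∫⁻_T, (fun x => ∏ j, G j x ^ p) ∂(fun _ => (volume : Measure ℝ))) x ≤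
      ∏ j, ((∫⋯∫⁻_(T ∩ S j), G j ∂(fun _ => (volume : Measure ℝ))) x) ^ p := by
  classical
  have hm : Measurable (fun x : ι → ℝ => ∏ j, G j x ^ p) :=
    Finset.measurable_prod _ (fun j _ => (hG j).pow_const p)
  have hmarg : ∀ j (U : Finset ι) x i r, i ∉ S j → 
      (∫⋯∫⁻_U, G j ∂(fun _ => (volume : Measure ℝ))) (Function.update x i r) =
      (∫⋯∫⁻_U, G j ∂(fun _ => (volume : Measure ℝ))) x := by
    intro j U x i r hi
    by_cases hU : i ∈ U
    · rw [lmarginal_update_of_mem _ hU]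
    · rw [lmarginal_update_of_notMem (hG j) hU]
      congr 1
      funext y
      exact hdep j y i r hi
  induction T using Finset.induction_on with
  | empty => intro x; simp
  | insert i T' hi ih =>
    intro x
    rw [lmarginal_insert _ hm hi]
    calc _ ≤ ∫⁻ r, ∏ j, ((∫⋯∫⁻_(T' ∩ S j), G j ∂(fun _ => (volume : Measure ℝ))) 
            (Function.update x i r)) ^ p := lintegral_mono (fun r => ih _)
      _ = ∫⁻ r, (∏ j ∈ Finset.univ.filter (fun j => ¬ i ∈ S j), 
            ((∫⋯∫⁻_(T' ∩ S j), G j ∂(fun _ => (volume : Measure ℝ))) x) ^ p) *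
            ∏ j ∈ Finset.univ.filter (fun j => i ∈ S j), 
            ((∫⋯∫⁻_(T' ∩ S j), G j ∂(fun _ => (volume : Measure ℝ))) 
            (Function.update x i r)) ^ p := by
          refine lintegral_congr fun r => ?_
          rw [← Finset.prod_filter_mul_prod_filter_not Finset.univ (fun j => i ∈ S j), mul_comm]
          congr 1
          refine Finset.prod_congr rfl fun j hj => ?_
          rw [hmarg j _ _ _ _ (by simpa using hj)]
      _ = (∏ j ∈ Finset.univ.filter (fun j => ¬ i ∈ S j), 
            ((∫⋯∫⁻_(T' ∩ S j), G j ∂(fun _ => (volume : Measure ℝ))) x) ^ p) *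
            ∫⁻ r, ∏ j ∈ Finset.univ.filter (fun j => i ∈ S j), 
            ((∫⋯∫⁻_(T' ∩ S j), G j ∂(fun _ => (volume : Measure ℝ))) 
            (Function.update x i r)) ^ p := by
          rw [lintegral_const_mul]
          refine Finset.measurable_prod _ (fun j _ => Measurable.pow_const ?_ p)
          exact ((hG j).lmarginal _).comp (measurable_update x)
      _ ≤ (∏ j ∈ Finset.univ.filter (fun j => ¬ i ∈ S j), 
            ((∫⋯∫⁻_(T' ∩ S j), G j ∂(fun _ => (volume : Measure ℝ))) x) ^ p) *
            ∏ j ∈ Finset.univ.filter (fun j => i ∈ S j), 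
            (∫⁻ r, (∫⋯∫⁻_(T' ∩ S j), G j ∂(fun _ => (volume : Measure ℝ))) 
            (Function.update x i r)) ^ p := by
          gcongr
          refine ENNReal.lintegral_prod_norm_pow_le (p := fun _ => p) _ (fun j _ => ?_) (hp i) (fun _ _ => hp0)
          exact (((hG j).lmarginal _).comp (measurable_update x)).aemeasurable
      _ = _ := by
          rw [mul_comm, ← Finset.prod_filter_mul_prod_filter_not Finset.univ (fun j => i ∈ S j)]
          congr 1
          · refine Finset.prod_congr rfl fun j hj => ?_
            have hj' : i ∈ S j := by simpa using hj
            rw [Finset.insert_inter_of_mem hj', lmarginal_insert _ (hG j)]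
            simp [hi]
          · refine Finset.prod_congr rfl fun j hj => ?_
            have hj' : i ∉ S j := by simpa using hj
            rw [Finset.insert_inter_of_notMem hj']

lemma exists_meas_majorant {α : Type*} [MeasurableSpace α] {μ : Measure α} {g : α → ℝ≥0∞}
    (hg : AEMeasurable g μ) : ∃ g', Measurable g' ∧ (∀ x, g x ≤ g' x) ∧ 
      ∫⁻ x, g' x ∂μ = ∫⁻ x, g x ∂μ := by
  classical
  obtain ⟨h, hm, hh⟩ := hg
  obtain ⟨N, hN, hNm, hN0⟩ := exists_measurable_superset_of_null (ae_iff.mp hh)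
  refine ⟨N.piecewise (fun _ => ⊤) h, Measurable.piecewise hNm measurable_const hm, ?_, ?_⟩
  · intro x
    by_cases hx : x ∈ N
    · simp [hx]
    · have : g x = h x := by
        by_contra h'
        exact hx (hN h')
      simp [hx, this]
  · refine lintegral_congr_ae ?_
    have : ∀ᵐ x ∂μ, x ∉ N := measure_eq_zero_iff_ae_notMem.mp hN0
    filter_upwards [this, hh] with x hx hx'
    simp [hx, hx']

/-- Generalised Loomis-Whitney inequality. -/
lemma loomis_whitney {ι J : Type*} [Fintype ι] [DecidableEq ι] [Fintype J]
    (S : J → Finset ι) (p : ℝ) (hp0 : 0 ≤ p)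
    (hp : ∀ i, ∑ _j ∈ Finset.univ.filter (fun j => i ∈ S j), p = 1)
    (F : (ι → ℝ) → ℝ≥0∞)
    (g : ∀ j, ((S j) → ℝ) → ℝ≥0∞) (hg : ∀ j, AEMeasurable (g j))
    (hle : ∀ j x, F x ≤ g j ((S j).restrict x)) :
    ∫⁻ x, F x ^ (Fintype.card J * p) ≤ ∏ j, (∫⁻ y, g j y) ^ p := by
  classical
  choose g' hm hgg hInt using fun j => exists_meas_majorant (hg j)
  have hG : ∀ j, Measurable (fun x : ι → ℝ => g' j ((S j).restrict x)) := fun j =>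
    (hm j).comp (Finset.measurable_restrict _)
  have key := lw_marginal S p hp0 hp (fun j x => g' j ((S j).restrict x)) hG ?_ Finset.univ 0
  · rw [lmarginal_univ] at key
    calc _ ≤ ∫⁻ x : ι → ℝ, ∏ j, g' j ((S j).restrict x) ^ p := by
          refine lintegral_mono fun x => ?_
          rw [mul_comm, ENNReal.rpow_mul, ENNReal.rpow_natCast, ← Finset.card_univ,
            ← Finset.prod_const]
          refine Finset.prod_le_prod' fun j _ => ?_
          exact ENNReal.rpow_le_rpow ((hle j x).trans (hgg j _)) hp0
      _ ≤ _ := key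
      _ = _ := by
          refine Finset.prod_congr rfl fun j _ => ?_
          rw [Finset.univ_inter, ← hInt]
          congr 1
          simp only [lmarginal, Function.restrict_updateFinset]
          rfl
  · intro j x i r hi
    congr 1
    funext a
    simp only [Finset.restrict]
    rw [Function.update_of_ne]
    rintro rfl
    exact hi a.2

end FShep

namespace FShep
open scoped ENNReal

lemma lintegral_affine {κ : Type*} [Fintype κ] (h : (κ → ℝ) → ℝ≥0∞) (s : ℝ) (hs : 0 < s)
    (q : κ → ℝ) : ENNReal.ofReal (s ^ Fintype.card κ) * ∫⁻ y, h (s • y + q) = ∫⁻ y, h y := by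
  have e1 : ∫⁻ y, h (s • y + q) = ∫⁻ y, (fun y => h (y + q)) y ∂(Measure.map (s • ·) (volume : Measure (κ → ℝ))) := by
    have := lintegral_map_equiv (μ := (volume : Measure (κ → ℝ))) (fun y => h (y + q)) 
      (Homeomorph.smulOfNeZero s hs.ne').toMeasurableEquiv
    exact this.symm
  rw [e1, Measure.map_addHaar_smul _ hs.ne', lintegral_smul_measure, 
    lintegral_add_right_eq_self h q, smul_eq_mul, ← mul_assoc, ← ENNReal.ofReal_mul (by positivity)]
  rw [abs_of_pos (by positivity), Module.finrank_fintype_fun_eq_card, mul_inv_cancel₀ (by positivity)]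
  simp

lemma rs_step {n : ℕ} (S : Finset (Fin n)) (F : (Fin n → ℝ) → ℝ≥0∞) (hF : Measurable F)
    (p : Fin n → ℝ) (t δ : ℝ) (ht0 : 0 < t) (ht1 : t < 1) (hδ : 0 < δ) (C : ℝ≥0∞) (hC : C ≠ ⊤)
    (h : ∀ x w : Fin n → ℝ, (∀ i ∈ S, w i = 0) → (∀ i ∉ S, 0 ≤ w i ∧ w i ≤ δ) → 
      C * F x ≤ F ((1 - t) • x + t • (p + w))) :
    C * ENNReal.ofReal ((1 - t) ^ S.card * (t * δ) ^ (n - S.card)) * 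
      ∫⁻ y : S → ℝ, ⨆ z, F (Function.updateFinset z S y) ≤ ∫⁻ x, F x := by
  classical
  let e := MeasurableEquiv.piEquivPiSubtypeProd (fun _ : Fin n => ℝ) (fun i => i ∈ S)
  have he : MeasurePreserving e := by
    convert volume_preserving_piEquivPiSubtypeProd (fun _ : Fin n => ℝ) (fun i => i ∈ S)
  have e1 : ∫⁻ x, F x = ∫⁻ y : {i // i ∈ S} → ℝ, ∫⁻ z : {i // i ∉ S} → ℝ, F (e.symm (y, z)) := by
    rw [← lintegral_prod (fun yz => F (e.symm yz)) (hF.comp e.symm.measurable).aemeasurable]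
    exact (he.symm.lintegral_comp hF).symm
  have hcS : Fintype.card {i // i ∈ S} = S.card := by simp
  have hcT : Fintype.card {i // i ∉ S} = n - S.card := by
    rw [Fintype.card_subtype_compl]; simp
  rw [e1, ← lintegral_affine (fun y : {i // i ∈ S} → ℝ => ∫⁻ z : {i // i ∉ S} → ℝ, F (e.symm (y, z))) (1 - t) (by linarith) (fun i : {i // i ∈ S} => t * p i), hcS]
  rw [ENNReal.ofReal_mul (pow_nonneg (by linarith) _), mul_left_comm C, mul_assoc]
  refine mul_le_mul' le_rfl ?_
  rw [← lintegral_const_mul' _ _ (ENNReal.mul_ne_top hC ENNReal.ofReal_ne_top)]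
  refine lintegral_mono fun y => ?_
  dsimp only
  rw [ENNReal.mul_iSup]
  refine iSup_le fun z0 => ?_
  set x := Function.updateFinset z0 S y with hx
  let B : Set ({i // i ∉ S} → ℝ) := Set.Icc (fun i => (1 - t) * z0 i + t * p i) 
    (fun i => (1 - t) * z0 i + t * p i + t * δ)
  have hB : volume B = ENNReal.ofReal ((t * δ) ^ (n - S.card)) := by
    rw [Real.volume_Icc_pi]
    simp only [add_sub_cancel_left, Finset.prod_const, Finset.card_univ]
    rw [hcT, ENNReal.ofReal_pow (by positivity)]
  calc _ = ∫⁻ z in B, C * F x := by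
        rw [lintegral_const, Measure.restrict_apply_univ, hB]; ring
    _ ≤ ∫⁻ z in B, F (e.symm ((1 - t) • y + (fun i : {i // i ∈ S} => t * p i), z)) := by
        refine setLIntegral_mono_ae' measurableSet_Icc (Filter.Eventually.of_forall fun z hz => ?_)
        have := h x (fun i => if hi : i ∈ S then 0 else (z ⟨i, hi⟩ - (1 - t) * z0 i - t * p i) / t) ?_ ?_
        · convert this using 2
          funext i
          by_cases hi : i ∈ S
          · simp [e, MeasurableEquiv.piEquivPiSubtypeProd, Equiv.piEquivPiSubtypeProd, hi, hx, Function.updateFinset]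
          · simp [e, MeasurableEquiv.piEquivPiSubtypeProd, Equiv.piEquivPiSubtypeProd, hi, hx, Function.updateFinset]
            field_simp
            ring
        · intro i hi; simp [hi]
        · intro i hi
          have h1 := hz.1 ⟨i, hi⟩
          have h2 := hz.2 ⟨i, hi⟩
          simp only [hi, dite_false] at h1 h2 ⊢
          constructor
          · apply div_nonneg _ ht0.le; linarith
          · rw [div_le_iff₀ ht0]; linarith
    _ ≤ _ := setLIntegral_le_lintegral _ _

end FShep

namespace FShep
open scoped ENNReal

def zeroOn {n : ℕ} (S : Finset (Fin n)) : Submodule ℝ (Fin n → ℝ) where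
  carrier := {w | ∀ i ∈ S, w i = 0}
  add_mem' := by intro a b ha hb i hi; simp [ha i hi, hb i hi]
  zero_mem' := by intro i hi; rfl
  smul_mem' := by intro c a ha i hi; simp [ha i hi]

def extL {n : ℕ} (S : Finset (Fin n)) : (S → ℝ) →ₗ[ℝ] (Fin n → ℝ) where
  toFun y := Function.updateFinset 0 S y
  map_add' := by
    intro a b; funext i; by_cases hi : i ∈ S <;> simp [Function.updateFinset, hi]
  map_smul' := by
    intro a b; funext i; by_cases hi : i ∈ S <;> simp [Function.updateFinset, hi]

lemma proj_lin {n : ℕ} (V : (Fin n → ℝ) ≃ₗ[ℝ] Eucl n) (S : Finset (Fin n)) :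
    ∃ H : Submodule ℝ (Eucl n), Module.finrank ℝ H = S.card ∧ ∃ c : ℝ≥0∞, c ≠ 0 ∧ c ≠ ⊤ ∧
      ∀ f : Eucl n → ℝ≥0∞, ∫⁻ y : S → ℝ, ⨆ z, f (V (Function.updateFinset z S y)) = 
        c * ∫⁻ y : H, ⨆ z : Hᗮ, f ((y : Eucl n) + (z : Eucl n)) := by
  classical
  let W : Submodule ℝ (Eucl n) := (zeroOn S).map (V : (Fin n → ℝ) →ₗ[ℝ] Eucl n)
  have hW : Wᗮᗮ = W := Submodule.orthogonal_orthogonal W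
  let L : (S → ℝ) →ₗ[ℝ] Wᗮ := (Wᗮ.orthogonalProjectionOnto : Eucl n →ₗ[ℝ] Wᗮ) ∘ₗ
    (V : (Fin n → ℝ) →ₗ[ℝ] Eucl n) ∘ₗ extL S
  have hLsub : ∀ y, ((L y : Wᗮ) : Eucl n) - V (extL S y) ∈ W := by
    intro y
    have : V (extL S y) - ((L y : Wᗮ) : Eucl n) ∈ Wᗮᗮ := 
      Submodule.sub_starProjection_mem_orthogonal _
    rw [hW] at this
    rw [← neg_sub]
    exact W.neg_mem this
  have hmemW : ∀ x, V x ∈ W ↔ x ∈ zeroOn S := by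
    intro x
    simp [W]
  have hinj : Function.Injective L := by
    rw [← LinearMap.ker_eq_bot, LinearMap.ker_eq_bot']
    intro y hy
    have h1 := hLsub y
    rw [hy] at h1
    simp only [Submodule.coe_zero, zero_sub, Submodule.neg_mem_iff, hmemW] at h1
    funext i
    have := h1 i i.2
    simpa [extL, Function.updateFinset] using this
  have hsurj : Function.Surjective L := by
    intro h
    refine ⟨S.restrict (V.symm h), ?_⟩
    have h1 := hLsub (S.restrict (V.symm h))
    have h2 : (h : Eucl n) - V (extL S (S.restrict (V.symm h))) ∈ W := by
      have : (h : Eucl n) = V (V.symm h) := by simp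
      nth_rw 1 [this]
      rw [← map_sub, hmemW]
      intro i hi
      simp [extL, Function.updateFinset, hi]
    have h3 := W.sub_mem h1 h2
    rw [sub_sub_sub_cancel_right] at h3
    have h4 : ((L (S.restrict (V.symm h)) - h : Wᗮ) : Eucl n) ∈ Wᗮ := Submodule.coe_mem _
    have h5 := Submodule.inner_right_of_mem_orthogonal h3 h4
    rw [Submodule.coe_sub, inner_self_eq_zero] at h5
    exact Subtype.ext (sub_eq_zero.mp h5)
  let Le : (S → ℝ) ≃L[ℝ] Wᗮ := (LinearEquiv.ofBijective L ⟨hinj, hsurj⟩).toContinuousLinearEquiv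
  refine ⟨Wᗮ, ?_, ?_⟩
  · rw [← Le.toLinearEquiv.finrank_eq]; simp
  have hH : (Measure.map Le (volume : Measure (S → ℝ))).IsAddHaarMeasure := Le.isAddHaarMeasure_map _
  have hc := Measure.isAddLeftInvariant_eq_smul (Measure.map Le (volume : Measure (S → ℝ)))
    (volume : Measure Wᗮ)
  have hc0 := Measure.addHaarScalarFactor_pos_of_isAddHaarMeasure
    (Measure.map Le (volume : Measure (S → ℝ))) (volume : Measure Wᗮ)
  set c : NNReal := Measure.addHaarScalarFactor
    (Measure.map Le (volume : Measure (S → ℝ))) (volume : Measure Wᗮ)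
  refine ⟨c, by exact_mod_cast hc0.ne', ENNReal.coe_ne_top, fun f => ?_⟩
  have key : ∀ y : S → ℝ, ⨆ z, f (V (Function.updateFinset z S y)) = 
      ⨆ z : Wᗮᗮ, f ((Le y : Eucl n) + (z : Eucl n)) := by
    intro y
    have hy := hLsub y
    apply le_antisymm
    · refine iSup_le fun z => ?_
      have : V (Function.updateFinset z S y) - (L y : Eucl n) ∈ Wᗮᗮ := by
        rw [hW]
        have : V (Function.updateFinset z S y) - V (extL S y) ∈ W := by
          rw [← map_sub, hmemW]
          intro i hi
          simp [extL, Function.updateFinset, hi]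
        convert W.sub_mem this hy using 1
        abel
      refine le_iSup_of_le ⟨_, this⟩ ?_
      apply le_of_eq
      congr 1
      change _ = (L y : Eucl n) + _
      simp
    · refine iSup_le fun z => ?_
      have hz : (z : Eucl n) ∈ W := hW.le z.2
      refine le_iSup_of_le (V.symm ((L y : Eucl n) + z)) ?_
      apply le_of_eq
      congr 1
      change (L y : Eucl n) + z = _
      rw [← V.symm_apply_eq]
      have h1 : (L y : Eucl n) + z - V (extL S y) ∈ W := by
        rw [add_sub_right_comm]; exact W.add_mem hy hz
      have h2 : V.symm ((L y : Eucl n) + z) - extL S y ∈ zeroOn S := by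
        rw [← hmemW]; simpa using h1
      funext i
      by_cases hi : i ∈ S
      · have := h2 i hi
        rw [Pi.sub_apply, sub_eq_zero] at this
        rw [this]
        simp [extL, Function.updateFinset, hi]
      · simp [Function.updateFinset, hi]
  simp_rw [key]
  have := lintegral_map_equiv (μ := (volume : Measure (S → ℝ))) 
      (fun y : Wᗮ => ⨆ z : Wᗮᗮ, f ((y : Eucl n) + (z : Eucl n))) Le.toHomeomorph.toMeasurableEquiv
  have h2 : (⇑Le.toHomeomorph.toMeasurableEquiv : (S → ℝ) → Wᗮ) = Le := rfl
  rw [h2, hc, lintegral_smul_measure] at this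
  exact this.symm

end FShep

namespace FShep
open scoped ENNReal Pointwise

lemma lc_min {n : ℕ} {f : Eucl n → ℝ} (h0 : ∀ x, 0 ≤ f x) (hl : IsLogConcave f) (x y : Eucl n)
    (a b : ℝ) (ha : 0 ≤ a) (hb : 0 ≤ b) (hab : a + b = 1) :
    min (f x) (f y) ≤ f (a • x + b • y) := by
  rcases ha.eq_or_lt with rfl | ha
  · have : b = 1 := by linarith
    subst this; simp
  rcases hb.eq_or_lt with rfl | hb
  · have : a = 1 := by linarith
    subst this; simp
  have := hl x y a ha (by linarith)
  have hb' : b = 1 - a := by linarith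
  subst hb'
  refine le_trans ?_ this
  set m := min (f x) (f y)
  have hm : 0 ≤ m := le_min (h0 x) (h0 y)
  calc m = m ^ a * m ^ (1 - a) := by
        rcases hm.eq_or_lt with h | h
        · rw [← h, Real.zero_rpow ha.ne', zero_mul]
        · rw [← Real.rpow_add h]; simp
    _ ≤ _ := by
        gcongr
        · exact Real.rpow_nonneg (h0 x) _
        · exact min_le_left _ _
        · exact min_le_right _ _

lemma aem_of_convex {X : Type*} [NormedAddCommGroup X] [NormedSpace ℝ X] [FiniteDimensional ℝ X]
    [MeasurableSpace X] [BorelSpace X] (μ : Measure X) [μ.IsAddHaarMeasure] (g : X → ℝ≥0∞) 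
    (h : ∀ c, Convex ℝ {x | c < g x}) : AEMeasurable g μ := by
  have : NullMeasurable g μ := by
    have : @Measurable (NullMeasurableSpace X μ) _ _ _ g := 
      measurable_of_Ioi (fun c => (h c).nullMeasurableSet μ)
    exact this
  exact this.aemeasurable

/-- the projection has convex superlevel sets -/
lemma proj_convex {n : ℕ} {X Z : Type*} [AddCommGroup X] [Module ℝ X] [AddCommGroup Z] [Module ℝ Z] 
    {f : Eucl n → ℝ} (h0 : ∀ x, 0 ≤ f x) (hl : IsLogConcave f) (A : X → Z → Eucl n)
    (hA : ∀ x x' z z' (a b : ℝ), A (a • x + b • x') (a • z + b • z') = a • A x z + b • A x' z') (c : ℝ≥0∞) :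
    Convex ℝ {x | c < ⨆ z, ENNReal.ofReal (f (A x z))} := by
  intro x hx y hy a b ha hb hab
  simp only [Set.mem_ofPred_eq, lt_iSup_iff] at hx hy ⊢
  obtain ⟨z, hz⟩ := hx
  obtain ⟨z', hz'⟩ := hy
  refine ⟨a • z + b • z', ?_⟩
  rw [hA]
  have h1 := ENNReal.ofReal_le_ofReal (lc_min h0 hl (A x z) (A y z') a b ha hb hab)
  refine lt_of_lt_of_le ?_ h1
  rcases min_choice (f (A x z)) (f (A y z')) with h | h <;> rw [h] <;> assumption

lemma q0_bdd {n : ℕ} {f : Eucl n → ℝ} (hf : MemQ0 f) : BddAbove (Set.range f) := by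
  obtain ⟨h0, hl, hu, hi, hpos⟩ := hf
  -- a superlevel set of positive measure
  have : ∃ ε > 0, 0 < volume {x | ε ≤ f x} := by
    by_contra! hcon
    have h1 : volume {x | 0 < f x} = 0 := by
      have : {x | 0 < f x} ⊆ ⋃ j : ℕ, {x | 1 / ((j : ℝ) + 1) ≤ f x} := by
        intro x hx
        obtain ⟨j, hj⟩ := exists_nat_one_div_lt (show (0 : ℝ) < f x from hx)
        exact Set.mem_iUnion.mpr ⟨j, hj.le⟩
      refine measure_mono_null this (measure_iUnion_null fun j => ?_)
      exact le_antisymm (hcon _ (by positivity)) bot_le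
    have h2 : f =ᵐ[volume] 0 := by
      have := measure_eq_zero_iff_ae_notMem.mp h1
      filter_upwards [this] with x hx
      simp only [not_lt] at hx
      exact le_antisymm hx (h0 x)
    rw [integral_congr_ae h2] at hpos
    simp at hpos
  obtain ⟨ε, hε, hG⟩ := this
  set G := {x | ε ≤ f x} with hGdef
  have hGm : MeasurableSet G := measurableSet_le measurable_const hu.measurable
  have hIfin : ∫⁻ x, ENNReal.ofReal (f x) ≠ ⊤ := by
    rw [← ofReal_integral_eq_lintegral_ofReal hi (Filter.Eventually.of_forall h0)]
    exact ENNReal.ofReal_ne_top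
  have hGfin : volume G ≠ ⊤ := by
    intro htop
    have := mul_meas_ge_le_lintegral (μ := volume) (hu.measurable.ennreal_ofReal) (ENNReal.ofReal ε)
    have hs : G ⊆ {x | ENNReal.ofReal ε ≤ ENNReal.ofReal (f x)} := fun x hx => 
      ENNReal.ofReal_le_ofReal hx
    have hs2 : volume {x | ENNReal.ofReal ε ≤ ENNReal.ofReal (f x)} = ⊤ := 
      top_unique (htop ▸ measure_mono hs)
    rw [hs2, ENNReal.mul_top (by simpa using hε)] at this
    exact hIfin (top_unique this)
  -- bound
  set c : ℝ := (volume G).toReal with hc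
  have hcpos : 0 < c := ENNReal.toReal_pos hG.ne' hGfin
  have key : ∀ x, Real.sqrt (f x * ε) * ((1/2) ^ n * c) ≤ ∫ y, f y := by
    intro x
    let T : Set (Eucl n) := (fun y => (1/2 : ℝ) • x + y) '' ((1/2 : ℝ) • G)
    have hT : volume T = ENNReal.ofReal ((1/2) ^ n) * volume G := by
      simp only [T]
      rw [Set.image_add_left, measure_preimage_add, Measure.addHaar_smul]
      simp
    have h1 : ENNReal.ofReal (Real.sqrt (f x * ε)) * volume T ≤ ∫⁻ y, ENNReal.ofReal (f y) := by
      have := mul_meas_ge_le_lintegral (μ := volume) (hu.measurable.ennreal_ofReal) 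
        (ENNReal.ofReal (Real.sqrt (f x * ε)))
      refine le_trans ?_ this
      gcongr
      rintro _ ⟨_, ⟨y, hy, rfl⟩, rfl⟩
      refine ENNReal.ofReal_le_ofReal ?_
      have := hl x y (1/2) (by norm_num) (by norm_num)
      norm_num at this ⊢
      refine le_trans ?_ this
      rw [Real.sqrt_eq_rpow, Real.mul_rpow (h0 x) hε.le]
      have hfx := Real.rpow_nonneg (h0 x) (1/2)
      gcongr
      exact hy
    rw [hT, ← ENNReal.ofReal_toReal hGfin, ← ENNReal.ofReal_mul (by positivity), 
      ← ENNReal.ofReal_mul (by positivity),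
      ← ofReal_integral_eq_lintegral_ofReal hi (Filter.Eventually.of_forall h0)] at h1
    exact (ENNReal.ofReal_le_ofReal_iff hpos.le).mp h1
  refine ⟨((∫ y, f y) / ((1/2) ^ n * c)) ^ 2 / ε, ?_⟩
  rintro _ ⟨x, rfl⟩
  have := key x
  rw [← le_div_iff₀ (by positivity)] at this
  rw [le_div_iff₀ hε]
  exact (Real.sqrt_le_left (by positivity)).mp this

lemma q0_lintegral {n : ℕ} {f : Eucl n → ℝ} (hf : MemQ0 f) : 
    ∫⁻ x, ENNReal.ofReal (f x) = ENNReal.ofReal (∫ x, f x) := 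
  (ofReal_integral_eq_lintegral_ofReal hf.2.2.2.1 (Filter.Eventually.of_forall hf.1)).symm

lemma q0_le_sup {n : ℕ} {f : Eucl n → ℝ} (hf : MemQ0 f) (x) : f x ≤ supNorm f := 
  le_ciSup (q0_bdd hf) x

lemma q0_sup_pos {n : ℕ} {f : Eucl n → ℝ} (hf : MemQ0 f) : 0 < supNorm f := by
  by_contra! h
  have : ∀ x, f x = 0 := fun x => le_antisymm ((q0_le_sup hf x).trans h) (hf.1 x)
  have h2 := hf.2.2.2.2
  simp [this] at h2

lemma projL1_eq {n : ℕ} {f : Eucl n → ℝ} (hf : MemQ0 f) (H : Submodule ℝ (Eucl n)) : 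
    projL1 f H = (∫⁻ y : H, ⨆ z : Hᗮ, ENNReal.ofReal (f ((y : Eucl n) + (z : Eucl n)))).toReal := by
  have hm : AEMeasurable (fun y : H => ⨆ z : Hᗮ, ENNReal.ofReal (f ((y : Eucl n) + (z : Eucl n)))) := by
    refine aem_of_convex _ _ (proj_convex hf.1 hf.2.1 (fun (y : H) (z : Hᗮ) => (y : Eucl n) + (z : Eucl n)) ?_)
    intro x x' z z' a b
    simp only [Submodule.coe_add, Submodule.coe_smul]
    module
  have hb : ∀ y : H, BddAbove (Set.range fun z : Hᗮ => f ((y : Eucl n) + (z : Eucl n))) := by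
    intro y
    refine ⟨supNorm f, ?_⟩
    rintro _ ⟨z, rfl⟩
    exact q0_le_sup hf _
  have he : ∀ y : H, (⨆ z : Hᗮ, f ((y : Eucl n) + (z : Eucl n))) = 
      (⨆ z : Hᗮ, ENNReal.ofReal (f ((y : Eucl n) + (z : Eucl n)))).toReal := by
    intro y
    rw [ENNReal.toReal_iSup (fun _ => ENNReal.ofReal_ne_top)]
    simp_rw [ENNReal.toReal_ofReal (hf.1 _)]
  unfold projL1
  simp_rw [he]
  rw [integral_toReal hm]
  refine Filter.Eventually.of_forall fun y => ?_
  refine lt_of_le_of_lt (b := ENNReal.ofReal (supNorm f)) ?_ ENNReal.ofReal_lt_top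
  exact iSup_le fun z => ENNReal.ofReal_le_ofReal (q0_le_sup hf _)

lemma level_exists {n : ℕ} {f : Eucl n → ℝ} (hf : MemQ0 f) : ∃ v, 0 < v ∧ v ≤ supNorm f ∧ 
    ENNReal.ofReal (0.49 * (∫ x, f x) / supNorm f * (supNorm f) ^ (1/2 : ℝ) * v ^ (-(1/2) : ℝ)) <
      volume {x | v ≤ f x} := by
  by_contra! hcon
  have hM := q0_sup_pos hf
  have hI := hf.2.2.2.2
  set M := supNorm f with hMdef
  set I := ∫ x, f x with hIdef
  have h1 : ∫⁻ x, ENNReal.ofReal (f x) = ∫⁻ t in Set.Ioi 0, volume {a | t ≤ f a} := 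
    lintegral_eq_lintegral_meas_le _ (Filter.Eventually.of_forall hf.1) hf.2.2.1.measurable.aemeasurable
  have h2 : ∫⁻ t in Set.Ioi 0, volume {a | t ≤ f a} ≤ 
      ∫⁻ t in Set.Ioc 0 M, ENNReal.ofReal (0.49 * I / M * M ^ (1/2 : ℝ) * t ^ (-(1/2) : ℝ)) := by
    rw [← lintegral_indicator measurableSet_Ioi, ← lintegral_indicator measurableSet_Ioc]
    refine lintegral_mono fun t => ?_
    by_cases ht : t ∈ Set.Ioc 0 M
    · rw [Set.indicator_of_mem ht, Set.indicator_of_mem (show t ∈ Set.Ioi 0 from ht.1)]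
      exact hcon t ht.1 ht.2
    · rw [Set.indicator_of_notMem ht]
      by_cases ht0 : t ∈ Set.Ioi (0 : ℝ)
      · rw [Set.indicator_of_mem ht0]
        have : {a | t ≤ f a} = ∅ := by
          rw [Set.eq_empty_iff_forall_notMem]
          intro a ha
          exact ht ⟨ht0, le_trans ha (q0_le_sup hf a)⟩
        rw [this]; simp
      · rw [Set.indicator_of_notMem ht0]
  have hInt : IntervalIntegrable (fun t : ℝ => 0.49 * I / M * M ^ (1/2 : ℝ) * t ^ (-(1/2) : ℝ)) volume 0 M := 
    (intervalIntegral.intervalIntegrable_rpow' (by norm_num)).const_mul _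
  have h3 : ∫⁻ t in Set.Ioc 0 M, ENNReal.ofReal (0.49 * I / M * M ^ (1/2 : ℝ) * t ^ (-(1/2) : ℝ)) = 
      ENNReal.ofReal (0.98 * I) := by
    rw [← ofReal_integral_eq_lintegral_ofReal]
    · rw [← intervalIntegral.integral_of_le hM.le, intervalIntegral.integral_const_mul, 
        integral_rpow (Or.inl (by norm_num))]
      congr 1
      have e1 : (-(1/2) : ℝ) + 1 = 1/2 := by norm_num
      rw [e1, Real.zero_rpow (by norm_num)]
      have : M ^ (1/2 : ℝ) * M ^ (1/2 : ℝ) = M := by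
        rw [← Real.rpow_add hM]; norm_num
      field_simp
      nlinarith [this]
    · exact (intervalIntegrable_iff_integrableOn_Ioc_of_le hM.le).mp hInt
    · refine (ae_restrict_iff' measurableSet_Ioc).mpr (Filter.Eventually.of_forall fun t ht => ?_)
      have := Real.rpow_nonneg ht.1.le (-(1/2))
      have h' := Real.rpow_nonneg hM.le (1/2)
      positivity
  rw [q0_lintegral hf] at h1
  have h4 : ENNReal.ofReal I ≤ ENNReal.ofReal (0.98 * I) := by
    rw [h1, ← h3]; exact h2
  rw [ENNReal.ofReal_le_ofReal_iff (by positivity)] at h4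
  linarith

/-- level set in coordinates -/
def lev {n : ℕ} (f : Eucl n → ℝ) (v R : ℝ) : Set (Fin n → ℝ) := 
  {x | v ≤ f (WithLp.toLp 2 x)} ∩ Metric.closedBall 0 R

lemma lev_meas {n : ℕ} {f : Eucl n → ℝ} (hf : MemQ0 f) (v R : ℝ) : MeasurableSet (lev f v R) := by
  refine MeasurableSet.inter ?_ measurableSet_closedBall
  exact measurableSet_le measurable_const (hf.2.2.1.measurable.comp (PiLp.volume_preserving_toLp (Fin n)).measurable)

lemma lev_convex {n : ℕ} {f : Eucl n → ℝ} (hf : MemQ0 f) (v R : ℝ) : Convex ℝ (lev f v R) := by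
  refine Convex.inter ?_ (convex_closedBall _ _)
  intro x hx y hy a b ha hb hab
  have := lc_min hf.1 hf.2.1 (WithLp.toLp 2 x) (WithLp.toLp 2 y) a b ha hb hab
  exact (le_min hx hy).trans this

lemma lev_exists {n : ℕ} {f : Eucl n → ℝ} (hf : MemQ0 f) : ∃ v R, 0 < v ∧ v ≤ supNorm f ∧ 
    ENNReal.ofReal (0.49 * (∫ x, f x) / supNorm f * (supNorm f) ^ (1/2 : ℝ) * v ^ (-(1/2) : ℝ)) <
      volume (lev f v R) := by
  obtain ⟨v, hv0, hvM, hv⟩ := level_exists hf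
  have e1 : volume {x : Fin n → ℝ | v ≤ f (WithLp.toLp 2 x)} = volume {x | v ≤ f x} := by
    have := (PiLp.volume_preserving_toLp (Fin n)).measure_preimage (s := {x : Eucl n | v ≤ f x})
      (measurableSet_le measurable_const hf.2.2.1.measurable).nullMeasurableSet
    exact this
  have e2 : {x : Fin n → ℝ | v ≤ f (WithLp.toLp 2 x)} = ⋃ j : ℕ, lev f v j := by
    unfold lev
    rw [← Set.inter_iUnion, Metric.iUnion_closedBall_nat, Set.inter_univ]
  have hmono : Monotone (fun j : ℕ => lev f v j) := by
    intro i j hij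
    refine Set.inter_subset_inter_right _ (Metric.closedBall_subset_closedBall ?_)
    exact_mod_cast hij
  have ht := tendsto_measure_iUnion_atTop (μ := (volume : Measure (Fin n → ℝ))) hmono
  rw [← e2, e1] at ht
  obtain ⟨j, hj⟩ := ((tendsto_order.mp ht).1 _ hv).exists
  exact ⟨v, j, hv0, hvM, hj⟩

end FShep

namespace FShep
open scoped ENNReal

lemma det_sq_integral {Ω : Type*} [MeasurableSpace Ω] (P : Measure Ω) [IsProbabilityMeasure P]
    {n : ℕ} (g : Fin n → Ω → ℝ) (hg : ∀ i j, Integrable (fun ω => g i ω * g j ω) P) :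
    Integrable (fun w : Fin n → Ω => (Matrix.of (fun j i => g j (w i))).det ^ 2)
      (Measure.pi (fun _ => P)) ∧ 
    ∫ w : Fin n → Ω, (Matrix.of (fun j i => g j (w i))).det ^ 2 ∂(Measure.pi (fun _ => P))
      = n.factorial * (Matrix.of (fun i j => ∫ ω, g i ω * g j ω ∂P)).det := by
  have hexp : ∀ w : Fin n → Ω, (Matrix.of (fun j i => g j (w i))).det ^ 2 = 
      ∑ σ : Equiv.Perm (Fin n), ∑ τ : Equiv.Perm (Fin n), 
        ((Equiv.Perm.sign σ : ℤ) : ℝ) * ((Equiv.Perm.sign τ : ℤ) : ℝ) * 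
          ∏ i, (g (σ i) (w i) * g (τ i) (w i)) := by
    intro w
    rw [sq, Matrix.det_apply', Finset.sum_mul_sum]
    refine Finset.sum_congr rfl fun σ _ => Finset.sum_congr rfl fun τ _ => ?_
    rw [Finset.prod_mul_distrib]
    simp only [Matrix.of_apply]
    ring
  have hInt : ∀ σ τ : Equiv.Perm (Fin n), Integrable (fun w : Fin n → Ω => 
      ((Equiv.Perm.sign σ : ℤ) : ℝ) * ((Equiv.Perm.sign τ : ℤ) : ℝ) * 
          ∏ i, (g (σ i) (w i) * g (τ i) (w i))) (Measure.pi (fun _ => P)) := by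
    intro σ τ
    refine Integrable.const_mul ?_ _
    exact Integrable.fintype_prod (f := fun i ω => g (σ i) ω * g (τ i) ω) (fun i => hg _ _)
  simp_rw [hexp]
  refine ⟨integrable_finsetSum _ fun σ _ => integrable_finsetSum _ fun τ _ => hInt σ τ, ?_⟩
  rw [integral_finsetSum _ (fun σ _ => integrable_finsetSum _ fun τ _ => hInt σ τ)]
  have : ∀ σ : Equiv.Perm (Fin n), ∫ w : Fin n → Ω, ∑ τ : Equiv.Perm (Fin n), 
        ((Equiv.Perm.sign σ : ℤ) : ℝ) * ((Equiv.Perm.sign τ : ℤ) : ℝ) * 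
          ∏ i, (g (σ i) (w i) * g (τ i) (w i)) ∂(Measure.pi (fun _ => P)) = 
      (Matrix.of (fun i j => ∫ ω, g i ω * g j ω ∂P)).det := by
    intro σ
    rw [integral_finsetSum _ (fun τ _ => hInt σ τ)]
    have h2 : ∀ τ : Equiv.Perm (Fin n), ∫ w : Fin n → Ω,  
        ((Equiv.Perm.sign σ : ℤ) : ℝ) * ((Equiv.Perm.sign τ : ℤ) : ℝ) * 
          ∏ i, (g (σ i) (w i) * g (τ i) (w i)) ∂(Measure.pi (fun _ => P)) = 
        ((Equiv.Perm.sign σ : ℤ) : ℝ) * (((Equiv.Perm.sign τ : ℤ) : ℝ) * 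
          ∏ i, (Matrix.transpose ((Matrix.of (fun i j => ∫ ω, g i ω * g j ω ∂P)).submatrix σ id)) (τ i) i) := by
      intro τ
      rw [integral_const_mul, mul_assoc]
      congr 2
      exact integral_fintype_prod_eq_prod (fun i ω => g (σ i) ω * g (τ i) ω)
    rw [Finset.sum_congr rfl fun τ _ => h2 τ, ← Finset.mul_sum, ← Matrix.det_apply', 
      Matrix.det_transpose, Matrix.det_permute, ← mul_assoc]
    have : ((Equiv.Perm.sign σ : ℤ) : ℝ) * ((Equiv.Perm.sign σ : ℤ) : ℝ) = 1 := by
      rcases Int.units_eq_one_or (Equiv.Perm.sign σ) with h | h <;> simp [h]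
    rw [this, one_mul]
  rw [Finset.sum_congr rfl fun σ _ => this σ]
  simp [Fintype.card_perm]

lemma gauss_lin {n : ℕ} (L : Matrix (Fin n) (Fin n) ℝ) (hL : L.det ≠ 0) (c : Fin n → ℝ) :
    Integrable (fun x : Fin n → ℝ => Real.exp (-(∑ i, (L.mulVec (x - c)) i ^ 2) / 2)) ∧
    ∫ x : Fin n → ℝ, Real.exp (-(∑ i, (L.mulVec (x - c)) i ^ 2) / 2) = 
      |L.det|⁻¹ * (2 * Real.pi) ^ ((n : ℝ) / 2) := by
  set G : (Fin n → ℝ) → ℝ := fun y => ∏ i, Real.exp (-(1/2) * y i ^ 2) with hG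
  have hGi : Integrable G := by
    exact Integrable.fintype_prod (f := fun _ s => Real.exp (-(1/2) * s ^ 2)) 
      (fun i => integrable_exp_neg_mul_sq (by norm_num))
  have hGv : ∫ y, G y = (2 * Real.pi) ^ ((n : ℝ) / 2) := by
    have := integral_fintype_prod_volume_eq_prod (ι := Fin n) (fun _ s => Real.exp (-(1/2) * s ^ 2))
    rw [hG, this]
    simp only [integral_gaussian, Finset.prod_const, Finset.card_univ, Fintype.card_fin]
    rw [Real.sqrt_eq_rpow, ← Real.rpow_natCast, ← Real.rpow_mul (by positivity)]
    congr 1 <;> ring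
  have hmap := Real.map_matrix_volume_pi_eq_smul_volume_pi hL
  have he : ∀ x : Fin n → ℝ, Real.exp (-(∑ i, (L.mulVec (x - c)) i ^ 2) / 2) = 
      (fun x => G (Matrix.toLin' L x)) (x - c) := by
    intro x
    simp only [hG, Matrix.toLin'_apply, ← Real.exp_sum]
    congr 1
    rw [← Finset.mul_sum]; ring
  have hG1 : Integrable (fun x => G (Matrix.toLin' L x)) := by
    have hm : Measurable (Matrix.toLin' L) := (Matrix.toLin' L).continuous_of_finiteDimensional.measurable
    have : Integrable G (Measure.map (Matrix.toLin' L) volume) := by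
      rw [hmap]
      exact hGi.smul_measure (by simp)
    exact this.comp_measurable hm
  simp_rw [he]
  refine ⟨hG1.comp_sub_right c, ?_⟩
  rw [integral_sub_right_eq_self (fun x => G (Matrix.toLin' L x)) c]
  have hm : Measurable (Matrix.toLin' L) := (Matrix.toLin' L).continuous_of_finiteDimensional.measurable
  have : ∫ x, G (Matrix.toLin' L x) = ∫ y, G y ∂(Measure.map (Matrix.toLin' L) volume) := by
    rw [integral_map hm.aemeasurable]
    rw [hmap]
    exact (hGi.smul_measure (by simp)).aestronglyMeasurable
  rw [this, hmap, integral_smul_measure, hGv, ENNReal.toReal_ofReal (by positivity), abs_inv, smul_eq_mul]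

lemma cond_integrable {n : ℕ} {K : Set (Fin n → ℝ)} {R : ℝ} (hKR : K ⊆ Metric.closedBall 0 R)
    (hK0 : volume K ≠ 0) {g : (Fin n → ℝ) → ℝ} (hg : Continuous g) :
    Integrable g (ProbabilityTheory.cond volume K) := by
  have : IntegrableOn g K :=
    (hg.continuousOn.integrableOn_compact (isCompact_closedBall 0 R)).mono_set hKR
  exact Integrable.smul_measure this (by simpa using hK0)

open scoped MatrixOrder in
lemma cov_bound {n : ℕ} {K : Set (Fin n → ℝ)} (hKm : MeasurableSet K) {R : ℝ} 
    (hKR : K ⊆ Metric.closedBall 0 R)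
    (hK0 : volume K ≠ 0) (c : Fin n → ℝ) (A : Matrix (Fin n) (Fin n) ℝ)
    (hA : ∀ i j, A i j = ∫ x, (x i - c i) * (x j - c j) ∂(ProbabilityTheory.cond volume K)) :
    (volume K).toReal ^ 2 ≤ (2 * Real.pi * Real.exp 1) ^ n * A.det := by
  have hKt : volume K ≠ ⊤ :=
    ((measure_mono hKR).trans_lt (isCompact_closedBall _ _).measure_lt_top).ne
  have hprob : IsProbabilityMeasure (ProbabilityTheory.cond volume K) :=
    ProbabilityTheory.cond_isProbabilityMeasure_of_finite hK0 hKt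
  set μ := ProbabilityTheory.cond (volume : Measure (Fin n → ℝ)) K with hμ
  have hInt : ∀ g : (Fin n → ℝ) → ℝ, Continuous g → Integrable g μ := 
    fun g hg => cond_integrable hKR hK0 hg
  -- quadratic form
  have hlin : ∀ u : Fin n → ℝ, ∫ x, (u ⬝ᵥ (x - c)) ^ 2 ∂μ = u ⬝ᵥ (A.mulVec u) := by
    intro u
    have e : ∀ x : Fin n → ℝ, (u ⬝ᵥ (x - c)) ^ 2 = 
        ∑ i, ∑ j, (u i * u j) * ((x i - c i) * (x j - c j)) := by
      intro x
      rw [sq, dotProduct, Finset.sum_mul_sum]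
      refine Finset.sum_congr rfl fun i _ => Finset.sum_congr rfl fun j _ => ?_
      simp; ring
    simp_rw [e]
    have hi : ∀ i j, Integrable (fun x : Fin n → ℝ => (u i * u j) * ((x i - c i) * (x j - c j))) μ :=
      fun i j => hInt _ (by fun_prop)
    rw [integral_finsetSum _ fun i _ => integrable_finsetSum _ fun j _ => hi i j]
    simp_rw [integral_finsetSum _ fun j _ => hi _ j, integral_const_mul, ← hA]
    simp only [dotProduct, Matrix.mulVec, Finset.mul_sum]
    refine Finset.sum_congr rfl fun i _ => Finset.sum_congr rfl fun j _ => ?_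
    ring
  have hsymm : A.IsHermitian := by
    ext i j
    simp only [Matrix.conjTranspose_apply, star_trivial, hA]
    congr 1; ext x; ring
  have hpsd : A.PosSemidef := by
    refine Matrix.PosSemidef.of_dotProduct_mulVec_nonneg hsymm fun u => ?_
    rw [star_trivial, ← hlin u]
    exact integral_nonneg fun x => sq_nonneg _
  have hac : ∀ᵐ x ∂μ, x ∈ K := ProbabilityTheory.ae_cond_mem hKm
  have hpd : A.PosDef := by
    refine Matrix.PosDef.of_dotProduct_mulVec_pos hsymm fun u hu => ?_
    rw [star_trivial, ← hlin u]
    refine lt_of_le_of_ne (integral_nonneg fun x => sq_nonneg _) fun h => ?_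
    have h0 := (integral_eq_zero_iff_of_nonneg (fun x => sq_nonneg _) 
      (hInt (fun x => (u ⬝ᵥ (x - c)) ^ 2) (by unfold dotProduct; fun_prop))).mp h.symm
    -- null hyperplane
    let ℓ : (Fin n → ℝ) →ₗ[ℝ] ℝ := 
      { toFun := fun x => u ⬝ᵥ x
        map_add' := fun x y => dotProduct_add u x y
        map_smul' := fun a x => dotProduct_smul a u x }
    have hℓ : ∀ x, ℓ x = u ⬝ᵥ x := fun x => rfl
    have hne : LinearMap.ker ℓ ≠ ⊤ := by
      intro htop
      have : ℓ u = 0 := by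
        have : u ∈ LinearMap.ker ℓ := by rw [htop]; trivial
        simpa using this
      rw [hℓ] at this
      exact hu (dotProduct_self_eq_zero.mp this)
    have hnull := Measure.addHaar_submodule (volume : Measure (Fin n → ℝ)) _ hne
    have hnull2 : volume {x : Fin n → ℝ | u ⬝ᵥ (x - c) = 0} = 0 := by
      have := measure_preimage_add_right (volume : Measure (Fin n → ℝ)) (-c) (LinearMap.ker ℓ)
      rw [hnull] at this
      rw [← this]
      congr 1
    have hμ0 : μ {x : Fin n → ℝ | u ⬝ᵥ (x - c) = 0} = 0 := 
      ProbabilityTheory.cond_absolutelyContinuous hnull2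
    have : ∀ᵐ x ∂μ, False := by
      have h3 : ∀ᵐ x ∂μ, ¬ (u ⬝ᵥ (x - c) = 0) := by
        rw [ae_iff]; simpa using hμ0
      filter_upwards [h0, h3] with x hx hx3
      exact hx3 (by simpa using hx)
    simp only [Filter.eventually_false_iff_eq_bot, ae_eq_bot] at this
    exact IsProbabilityMeasure.ne_zero μ this
  obtain ⟨B, hB⟩ := CStarAlgebra.nonneg_iff_eq_star_mul_self.mp hpsd.nonneg
  rw [Matrix.star_eq_conjTranspose, Matrix.conjTranspose_eq_transpose_of_trivial] at hB
  have hdetA : A.det = B.det ^ 2 := by rw [hB, Matrix.det_mul, Matrix.det_transpose, sq]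
  have hBd : B.det ≠ 0 := by
    intro h
    have := hpd.det_pos
    rw [hdetA, h] at this
    norm_num at this
  have hBu : IsUnit B.det := isUnit_iff_ne_zero.mpr hBd
  have hBtu : IsUnit B.transpose.det := by rwa [Matrix.det_transpose]
  set L : Matrix (Fin n) (Fin n) ℝ := (B.transpose)⁻¹ with hL
  have hLd : L.det = B.det⁻¹ := by
    rw [hL, Matrix.det_nonsing_inv, Matrix.det_transpose, Ring.inverse_eq_inv']
  have hLAL : L * A * L.transpose = 1 := by
    rw [hB, ← Matrix.mul_assoc, hL, Matrix.nonsing_inv_mul _ hBtu, Matrix.one_mul, 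
      ← Matrix.transpose_nonsing_inv, Matrix.transpose_transpose, Matrix.mul_nonsing_inv _ hBu]
  have hsum : ∫ x, ∑ i, (L.mulVec (x - c)) i ^ 2 ∂μ = n := by
    have hi : ∀ i, Integrable (fun x : Fin n → ℝ => (L.mulVec (x - c)) i ^ 2) μ := 
      fun i => hInt _ (by unfold Matrix.mulVec dotProduct; fun_prop)
    rw [integral_finsetSum _ fun i _ => hi i]
    have : ∀ i, ∫ x, (L.mulVec (x - c)) i ^ 2 ∂μ = 1 := by
      intro i
      have h1 := hlin (L i)
      have h2 : (L * A * L.transpose) i i = 1 := by rw [hLAL]; simp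
      rw [show ∫ x, (L.mulVec (x - c)) i ^ 2 ∂μ = ∫ x, (L i ⬝ᵥ (x - c)) ^ 2 ∂μ from rfl, h1, ← h2, Matrix.mul_assoc]
      simp only [Matrix.mul_apply, Matrix.mulVec, dotProduct, Matrix.transpose_apply]
    simp [this]
  obtain ⟨hGi, hGv⟩ := gauss_lin L (by rw [hLd]; exact inv_ne_zero hBd) c
  set G : (Fin n → ℝ) → ℝ := fun x => Real.exp (-(∑ i, (L.mulVec (x - c)) i ^ 2) / 2) with hG
  have hlow : Real.exp (-(n : ℝ)/2) ≤ ∫ x, G x ∂μ := by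
    have hsi : Integrable (fun x : Fin n → ℝ => ∑ i, (L.mulVec (x - c)) i ^ 2) μ := 
      hInt _ (by unfold Matrix.mulVec dotProduct; fun_prop)
    have h1 : ∫ x, Real.exp (-(n : ℝ)/2) * (1 + (n : ℝ) / 2 - (1/2) * ∑ i, (L.mulVec (x - c)) i ^ 2) ∂μ 
        = Real.exp (-(n : ℝ)/2) := by
      rw [integral_const_mul, integral_sub (integrable_const _) (hsi.const_mul _), integral_const_mul, hsum]
      simp
      ring
    rw [← h1]
    refine integral_mono ?_ ?_ fun x => ?_
    · exact ((integrable_const _).sub (hsi.const_mul _)).const_mul _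
    · exact hInt _ (by rw [hG]; unfold Matrix.mulVec dotProduct; fun_prop)
    · simp only [hG]
      set s := ∑ i, (L.mulVec (x - c)) i ^ 2
      have : Real.exp (-s/2) = Real.exp (-(n : ℝ)/2) * Real.exp ((n : ℝ)/2 - s/2) := by
        rw [← Real.exp_add]; congr 1; ring
      rw [this]
      refine mul_le_mul_of_nonneg_left ?_ (Real.exp_pos _).le
      have := Real.add_one_le_exp ((n : ℝ)/2 - s/2)
      linarith
  have hup : (volume K).toReal * ∫ x, G x ∂μ ≤ |L.det|⁻¹ * (2 * Real.pi) ^ ((n : ℝ) / 2) := by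
    rw [← hGv]
    have : ∫ x, G x ∂μ = (volume K).toReal⁻¹ * ∫ x in K, G x := by
      rw [hμ, ProbabilityTheory.cond, integral_smul_measure, ENNReal.toReal_inv, smul_eq_mul]
    rw [this, ← mul_assoc, mul_inv_cancel₀ (ENNReal.toReal_pos hK0 hKt).ne', one_mul]
    exact setIntegral_le_integral hGi (Filter.Eventually.of_forall fun x => (Real.exp_pos _).le)
  have hfin : (volume K).toReal * Real.exp (-(n : ℝ)/2) ≤ |B.det| * (2 * Real.pi) ^ ((n : ℝ) / 2) := by
    refine (mul_le_mul_of_nonneg_left hlow ENNReal.toReal_nonneg).trans (hup.trans_eq ?_)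
    rw [hLd, abs_inv, inv_inv]
  have hsq := pow_le_pow_left₀ (by positivity) hfin 2
  rw [mul_pow, mul_pow, sq_abs, ← hdetA, ← Real.exp_nat_mul, ← Real.rpow_natCast ((2 * Real.pi) ^ _),
    ← Real.rpow_mul (by positivity)] at hsq
  have e1 : (n : ℝ) / 2 * ((2 : ℕ) : ℝ) = n := by push_cast; ring
  have e2 : ((2 : ℕ) : ℝ) * (-(n : ℝ)/2) = -n := by push_cast; ring
  rw [e1, e2, Real.rpow_natCast, Real.exp_neg, ← div_eq_mul_inv, div_le_iff₀ (Real.exp_pos _)] at hsq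
  refine hsq.trans_eq ?_
  rw [mul_pow _ (Real.exp 1), ← Real.exp_nat_mul, mul_one]
  ring

lemma selection {n : ℕ} {K : Set (Fin n → ℝ)} (hKm : MeasurableSet K) {R : ℝ} 
    (hKR : K ⊆ Metric.closedBall 0 R) (hK0 : volume K ≠ 0) : 
    ∃ x x' : Fin n → (Fin n → ℝ), (∀ i, x i ∈ K) ∧ (∀ i, x' i ∈ K) ∧ 
      n.factorial * 2 ^ n * (volume K).toReal ^ 2 ≤ 
        (2 * Real.pi * Real.exp 1) ^ n * (Matrix.of (fun j i => x i j - x' i j)).det ^ 2 := by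
  have hKt : volume K ≠ ⊤ :=
    ((measure_mono hKR).trans_lt (isCompact_closedBall _ _).measure_lt_top).ne
  have hprob : IsProbabilityMeasure (ProbabilityTheory.cond volume K) :=
    ProbabilityTheory.cond_isProbabilityMeasure_of_finite hK0 hKt
  set μ := ProbabilityTheory.cond (volume : Measure (Fin n → ℝ)) K with hμ
  have hInt : ∀ g : (Fin n → ℝ) → ℝ, Continuous g → Integrable g μ := 
    fun g hg => cond_integrable hKR hK0 hg
  have hac : ∀ᵐ x ∂μ, x ∈ K := ProbabilityTheory.ae_cond_mem hKm
  set c : Fin n → ℝ := fun i => ∫ x, x i ∂μ with hc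
  have hc0 : ∀ i, ∫ x, (x i - c i) ∂μ = 0 := by
    intro i
    rw [integral_sub (hInt (fun x => x i) (by fun_prop)) (integrable_const _)]
    simp [hc]
  set A : Matrix (Fin n) (Fin n) ℝ := Matrix.of fun i j => ∫ x, (x i - c i) * (x j - c j) ∂μ with hA
  have hcov := cov_bound hKm hKR hK0 c A (fun i j => rfl)
  set P := μ.prod μ with hP
  let g : Fin n → (Fin n → ℝ) × (Fin n → ℝ) → ℝ := fun i w => w.1 i - w.2 i
  have hi1 : ∀ i, Integrable (fun x : Fin n → ℝ => x i - c i) μ := fun i => hInt _ (by fun_prop)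
  have hi2 : ∀ i j, Integrable (fun x : Fin n → ℝ => (x i - c i) * (x j - c j)) μ := 
    fun i j => hInt _ (by fun_prop)
  have hge : ∀ i j w, g i w * g j w = (w.1 i - c i) * (w.1 j - c j) - (w.1 i - c i) * (w.2 j - c j)
      - (w.1 j - c j) * (w.2 i - c i) + (w.2 i - c i) * (w.2 j - c j) := by
    intro i j w; simp only [g]; ring
  have hA1 : ∀ i j, Integrable (fun w : (Fin n → ℝ) × (Fin n → ℝ) => 
      (w.1 i - c i) * (w.1 j - c j)) P := fun i j => (hi2 i j).comp_fst μ
  have hA2 : ∀ i j, Integrable (fun w : (Fin n → ℝ) × (Fin n → ℝ) => 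
      (w.2 i - c i) * (w.2 j - c j)) P := fun i j => (hi2 i j).comp_snd μ
  have hA3 : ∀ i j, Integrable (fun w : (Fin n → ℝ) × (Fin n → ℝ) => 
      (w.1 i - c i) * (w.2 j - c j)) P := fun i j => (hi1 i).mul_prod (hi1 j)
  have hgi : ∀ i j, Integrable (fun w => g i w * g j w) P := by
    intro i j
    simp_rw [hge]
    exact (((hA1 i j).sub (hA3 i j)).sub (hA3 j i)).add (hA2 i j)
  have hgv : ∀ i j, ∫ w, g i w * g j w ∂P = 2 * A i j := by
    intro i j
    simp_rw [hge]
    have q1 := integral_sub (hA1 i j) (hA3 i j)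
    have q2 := integral_sub ((hA1 i j).sub (hA3 i j)) (hA3 j i)
    have q3 := integral_add (((hA1 i j).sub (hA3 i j)).sub (hA3 j i)) (hA2 i j)
    simp only [Pi.sub_apply] at q2 q3
    rw [q1] at q2
    rw [q2] at q3
    refine q3.trans ?_
    have z : ∀ i j, ∫ w : (Fin n → ℝ) × (Fin n → ℝ), (w.1 i - c i) * (w.2 j - c j) ∂P = 0 := by
      intro i j
      rw [hP, integral_prod_mul (fun x : Fin n → ℝ => x i - c i) (fun x : Fin n → ℝ => x j - c j), hc0, zero_mul]
    rw [z, z, hP, integral_fun_fst (fun x : Fin n → ℝ => (x i - c i) * (x j - c j)), 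
      integral_fun_snd (fun x : Fin n → ℝ => (x i - c i) * (x j - c j))]
    simp [hA]
    ring
  obtain ⟨hdi, hdv⟩ := det_sq_integral P g hgi
  have hnull : ∀ᵐ w ∂(Measure.pi (fun _ : Fin n => P)), ∀ i, (w i).1 ∈ K ∧ (w i).2 ∈ K := by
    rw [Filter.eventually_all]
    intro i
    have hPK : ∀ᵐ w ∂P, w.1 ∈ K ∧ w.2 ∈ K := 
      (Measure.quasiMeasurePreserving_fst.ae hac).and (Measure.quasiMeasurePreserving_snd.ae hac)
    exact (Measure.quasiMeasurePreserving_eval (fun _ : Fin n => P) i).ae hPK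
  obtain ⟨w, hw, hle⟩ := exists_notMem_null_integral_le hdi (ae_iff.mp hnull)
  rw [hdv] at hle
  simp only [Set.mem_ofPred_eq, not_not] at hw
  refine ⟨fun i => (w i).1, fun i => (w i).2, fun i => (hw i).1, fun i => (hw i).2, ?_⟩
  have hdet2 : (Matrix.of (fun i j => ∫ ω, g i ω * g j ω ∂P)).det = 2 ^ n * A.det := by
    have : (Matrix.of (fun i j => ∫ ω, g i ω * g j ω ∂P)) = (2 : ℝ) • A := by
      ext i j; simp [hgv]
    rw [this, Matrix.det_smul]; simp
  rw [hdet2] at hle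
  have hpos : (0 : ℝ) ≤ (2 * Real.pi * Real.exp 1) ^ n := by positivity
  calc (n.factorial : ℝ) * 2 ^ n * (volume K).toReal ^ 2 
      ≤ n.factorial * 2 ^ n * ((2 * Real.pi * Real.exp 1) ^ n * A.det) := by gcongr
    _ = (2 * Real.pi * Real.exp 1) ^ n * (n.factorial * (2 ^ n * A.det)) := by ring
    _ ≤ _ := mul_le_mul_of_nonneg_left hle hpos

end FShep

namespace FShep
open scoped ENNReal

lemma num_ge3 (n : ℕ) (hn : 3 ≤ n) : 
    (Real.pi * Real.exp 1 ^ 2) ^ n * (n : ℝ) ^ n ≤ 0.2401 * n.factorial * 64 ^ n := by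
  have hp := Real.pi_lt_d4
  have hp0 := Real.pi_pos
  have he := Real.exp_one_lt_d9
  have he0 := Real.exp_pos 1
  induction n, hn using Nat.le_induction with
  | base =>
    have h1 : Real.pi * Real.exp 1 ^ 2 ≤ 23.214 := by
      calc Real.pi * Real.exp 1 ^ 2 ≤ 3.1416 * 2.7182818286 ^ 2 := by gcongr
        _ ≤ 23.214 := by norm_num
    calc (Real.pi * Real.exp 1 ^ 2) ^ 3 * ((3 : ℕ) : ℝ) ^ 3 ≤ 23.214 ^ 3 * ((3 : ℕ) : ℝ) ^ 3 := by gcongr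
      _ ≤ _ := by norm_num [Nat.factorial]
  | succ n hn ih =>
    have hn0 : (0 : ℝ) < n := by positivity
    have h1 : ((n : ℝ) + 1) ^ n ≤ (n : ℝ) ^ n * Real.exp 1 := by
      have h2 : (1 : ℝ) + 1 / n ≤ Real.exp (1 / n) := by
        have := Real.add_one_le_exp (1 / (n : ℝ)); linarith
      have h3 : ((n : ℝ) + 1) = n * (1 + 1 / n) := by field_simp
      rw [h3, mul_pow]
      gcongr
      calc (1 + 1 / (n : ℝ)) ^ n ≤ Real.exp (1 / n) ^ n := by gcongr
        _ = Real.exp 1 := by rw [← Real.exp_nat_mul]; congr 1; field_simp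
    have h4 : Real.pi * Real.exp 1 ^ 2 * Real.exp 1 ≤ 64 := by
      calc Real.pi * Real.exp 1 ^ 2 * Real.exp 1 ≤ 3.1416 * 2.7182818286 ^ 2 * 2.7182818286 := by gcongr
        _ ≤ 64 := by norm_num
    push_cast [Nat.factorial_succ]
    calc (Real.pi * Real.exp 1 ^ 2) ^ (n + 1) * ((n : ℝ) + 1) ^ (n + 1) 
        = (Real.pi * Real.exp 1 ^ 2) ^ n * (Real.pi * Real.exp 1 ^ 2) * ((n : ℝ) + 1) * ((n : ℝ) + 1) ^ n := by ring
      _ ≤ (Real.pi * Real.exp 1 ^ 2) ^ n * (Real.pi * Real.exp 1 ^ 2) * ((n : ℝ) + 1) * ((n : ℝ) ^ n * Real.exp 1) := by gcongr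
      _ = ((Real.pi * Real.exp 1 ^ 2) ^ n * (n : ℝ) ^ n) * (Real.pi * Real.exp 1 ^ 2 * Real.exp 1) * ((n : ℝ) + 1) := by ring
      _ ≤ (0.2401 * n.factorial * 64 ^ n) * 64 * ((n : ℝ) + 1) := by gcongr
      _ = _ := by ring

lemma num_b (n k m : ℕ) (hn : 2 ≤ n) (hk : 1 ≤ k) (hm : 1 ≤ m) (hkm : k + m = n) : ∃ b : ℝ, 0 < b ∧ 
    b ^ m ≤ (1 - (m : ℝ) / (2 * n)) ^ k ∧ 
    (Real.pi * Real.exp 1) ^ n * (n : ℝ) ^ n ≤ 0.2401 * n.factorial * (64 * b ^ 2) ^ n := by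
  have hp := Real.pi_lt_d4
  have hp0 := Real.pi_pos
  have he := Real.exp_one_lt_d9
  have he0 := Real.exp_pos 1
  rcases hn.eq_or_lt with h2 | h3
  · have hk' : k = 1 := by omega
    have hm' : m = 1 := by omega
    subst hk' hm' 
    subst h2
    refine ⟨3/4, by norm_num, by norm_num, ?_⟩
    calc (Real.pi * Real.exp 1) ^ 2 * ((2 : ℕ) : ℝ) ^ 2 ≤ (3.1416 * 2.7182818286) ^ 2 * ((2 : ℕ) : ℝ) ^ 2 := by gcongr
      _ ≤ _ := by norm_num [Nat.factorial]
  · refine ⟨Real.exp (-(1/2)), Real.exp_pos _, ?_, ?_⟩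
    · have hmn : (m : ℝ) = n - k := by rw [← hkm]; push_cast; ring
      have hk0 : (1 : ℝ) ≤ k := by exact_mod_cast hk
      have hm0 : (1 : ℝ) ≤ m := by exact_mod_cast hm
      have hn0 : (0 : ℝ) < n := by positivity
      have hx1 : 0 < 1 - (m : ℝ) / (2 * n) := by
        rw [sub_pos, div_lt_one (by positivity)]; linarith
      set x := (m : ℝ) / (2 * n) with hx
      have h1 : Real.exp (-(x / (1 - x))) ≤ 1 - x := by
        rw [Real.exp_neg, inv_le_comm₀ (Real.exp_pos _) hx1]
        have := Real.add_one_le_exp (x / (1 - x))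
        have e : (1 - x)⁻¹ = x / (1 - x) + 1 := by field_simp; ring
        rw [e]; exact this
      calc Real.exp (-(1/2)) ^ m = Real.exp (m * (-(1/2))) := by rw [← Real.exp_nat_mul]
        _ ≤ Real.exp (k * (-(x / (1 - x)))) := by
          apply Real.exp_le_exp.mpr
          have e : x / (1 - x) = m / (2 * n - m) := by
            have : (2 * (n : ℝ) - m) ≠ 0 := by
              have : 0 < 2 * (n : ℝ) - m := by linarith
              exact this.ne'
            have h1x : 1 - x = (2 * n - m) / (2 * n) := by rw [hx]; field_simp
            rw [h1x, hx]; field_simp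
          rw [e]
          have hd : 0 < 2 * (n : ℝ) - m := by linarith
          have : (k : ℝ) * (m / (2 * n - m)) ≤ m * (1/2) := by
            rw [mul_div_assoc', div_le_iff₀ hd]
            nlinarith
          linarith
        _ = Real.exp (-(x / (1 - x))) ^ k := by rw [← Real.exp_nat_mul]
        _ ≤ _ := by gcongr
    · have := num_ge3 n h3
      have e : Real.exp (-(1/2)) ^ 2 = (Real.exp 1)⁻¹ := by
        rw [← Real.exp_nat_mul, ← Real.exp_neg]; norm_num
      rw [e, mul_pow 64, inv_pow, ← mul_assoc, ← div_eq_mul_inv, le_div_iff₀ (by positivity)]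
      refine le_trans (le_of_eq ?_) this
      rw [mul_pow, mul_pow]; ring

/-- the final real inequality -/
lemma final_real (n k m : ℕ) (hn : 2 ≤ n) (hk : 1 ≤ k) (hm : 1 ≤ m) (hkm : k + m = n)
    (I M v κ d : ℝ) (hI : 0 < I) (hM : 0 < M) (hv : 0 < v) (hκ0 : 0 ≤ κ) (hd : 0 < d)
    (hκ : 0.49 * I / M * M ^ (1/2 : ℝ) * v ^ (-(1/2) : ℝ) ≤ κ)
    (hsel : n.factorial * 2 ^ n * κ ^ 2 ≤ (2 * Real.pi * Real.exp 1) ^ n * d ^ 2) :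
    I * d ^ (-((m : ℝ) / n)) ≤ (16 * Real.sqrt n) ^ m * I ^ ((k : ℝ) / n) * M ^ ((m : ℝ) / n) * 
      ((v / M) ^ ((m : ℝ) / (2 * n)) * ((1 - (m : ℝ) / (2 * n)) ^ k * (1 / (2 * n)) ^ m)) := by
  obtain ⟨b, hb0, hb, hnum⟩ := num_b n k m hn hk hm hkm
  have hn0 : (0 : ℝ) < n := by positivity
  have hmn : (k : ℝ) / n + m / n = 1 := by rw [← hkm]; push_cast; field_simp
  have hs : Real.sqrt n ^ 2 = n := Real.sq_sqrt hn0.le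
  have hs0 : 0 < Real.sqrt n := Real.sqrt_pos.mpr hn0
  -- key inequality
  have key1 : κ ≤ 0.49 * d * (8 * b / Real.sqrt n) ^ n := by
    refine (pow_le_pow_iff_left₀ hκ0 (by positivity) two_ne_zero).mp ?_
    have hf0 : (0 : ℝ) < n.factorial := by exact_mod_cast n.factorial_pos
    have e : ((8 * b / Real.sqrt n) ^ n) ^ 2 = (64 * b ^ 2) ^ n / n ^ n := by
      rw [← pow_mul, mul_comm n 2, pow_mul, div_pow, hs, ← div_pow]; ring_nf
    rw [mul_pow, mul_pow, e]
    have h1 : n.factorial * κ ^ 2 ≤ (Real.pi * Real.exp 1) ^ n * d ^ 2 := by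
      have h2 : (0 : ℝ) < 2 ^ n := by positivity
      have h3 : (2 * Real.pi * Real.exp 1) ^ n = 2 ^ n * (Real.pi * Real.exp 1) ^ n := by
        rw [← mul_pow]; ring_nf
      rw [h3] at hsel
      refine le_of_mul_le_mul_left ?_ h2
      linarith
    rw [mul_div_assoc', le_div_iff₀ (by positivity)]
    refine le_of_mul_le_mul_left ?_ hf0
    calc n.factorial * (κ ^ 2 * (n : ℝ) ^ n) = (n.factorial * κ ^ 2) * (n : ℝ) ^ n := by ring
      _ ≤ ((Real.pi * Real.exp 1) ^ n * d ^ 2) * (n : ℝ) ^ n := by gcongr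
      _ = ((Real.pi * Real.exp 1) ^ n * (n : ℝ) ^ n) * d ^ 2 := by ring
      _ ≤ (0.2401 * n.factorial * (64 * b ^ 2) ^ n) * d ^ 2 := by gcongr
      _ = _ := by ring
  have key2 : I / (M * d) ≤ (v / M) ^ (1/2 : ℝ) * (8 * b / Real.sqrt n) ^ n := by
    have h1 := hκ.trans key1
    have e : (v / M) ^ (1/2 : ℝ) = (M ^ (1/2 : ℝ) * v ^ (-(1/2) : ℝ))⁻¹ := by
      rw [Real.div_rpow hv.le hM.le, Real.rpow_neg hv.le, mul_inv, inv_inv]; field_simp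
    have hq : 0 < M ^ (1/2 : ℝ) * v ^ (-(1/2) : ℝ) := by positivity
    rw [e]
    set q := M ^ (1/2 : ℝ) * v ^ (-(1/2) : ℝ)
    set z := (8 * b / Real.sqrt n) ^ n
    have h2 : 0.49 * I / M * q ≤ 0.49 * d * z := by
      simp only [q]; rw [← mul_assoc]; exact h1
    rw [div_le_iff₀ (by positivity), inv_mul_eq_div, div_mul_eq_mul_div, le_div_iff₀ hq]
    have h3 : 0.49 * I / M * q * M = 0.49 * I * q := by field_simp
    have h4 := mul_le_mul_of_nonneg_right h2 hM.le
    rw [h3] at h4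
    linarith
  have key3 : (I / (M * d)) ^ ((m : ℝ) / n) ≤ (v / M) ^ ((m : ℝ) / (2 * n)) * (8 * b / Real.sqrt n) ^ m := by
    refine (Real.rpow_le_rpow (by positivity) key2 (by positivity)).trans_eq ?_
    rw [Real.mul_rpow (by positivity) (by positivity), ← Real.rpow_mul (by positivity), 
      ← Real.rpow_natCast (8 * b / Real.sqrt n) n, ← Real.rpow_mul (by positivity), 
      ← Real.rpow_natCast (8 * b / Real.sqrt n) m]
    congr 2
    · field_simp
    · field_simp
  have e1 : I = I ^ ((k : ℝ) / n) * I ^ ((m : ℝ) / n) := by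
    rw [← Real.rpow_add hI, hmn, Real.rpow_one]
  have e2 : (8 * b / Real.sqrt n) ^ m = (16 * Real.sqrt n) ^ m * (b ^ m * (1 / (2 * n)) ^ m) := by
    rw [← mul_pow, ← mul_pow]
    congr 1
    have hne := hs0.ne'
    have : (n : ℝ) = Real.sqrt n * Real.sqrt n := by rw [← sq, hs]
    rw [div_eq_iff hne]
    have h5 : 16 * Real.sqrt n * (b * (1 / (2 * n))) * Real.sqrt n = 16 * (Real.sqrt n * Real.sqrt n) * b / (2 * n) := by ring
    rw [h5, ← this]; field_simp; ring
  calc I * d ^ (-((m : ℝ) / n)) = I ^ ((k : ℝ) / n) * M ^ ((m : ℝ) / n) * (I / (M * d)) ^ ((m : ℝ) / n) := by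
        rw [Real.div_rpow hI.le (by positivity), Real.mul_rpow hM.le hd.le, Real.rpow_neg hd.le]
        nth_rewrite 1 [e1]
        have : M ^ ((m : ℝ) / n) ≠ 0 := (Real.rpow_pos_of_pos hM _).ne'
        field_simp
    _ ≤ I ^ ((k : ℝ) / n) * M ^ ((m : ℝ) / n) * ((v / M) ^ ((m : ℝ) / (2 * n)) * (8 * b / Real.sqrt n) ^ m) := by gcongr
    _ = (16 * Real.sqrt n) ^ m * I ^ ((k : ℝ) / n) * M ^ ((m : ℝ) / n) * 
      ((v / M) ^ ((m : ℝ) / (2 * n)) * (b ^ m * (1 / (2 * n)) ^ m)) := by rw [e2]; ring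
    _ ≤ _ := by gcongr

end FShep

namespace FShep
open scoped ENNReal

/-- cyclic intervals -/
def cyc (n k : ℕ) [NeZero n] (j : Fin n) : Finset (Fin n) :=
  Finset.univ.filter (fun i => (i - j).val < k)

lemma card_lt_fin (n k : ℕ) (hk : k ≤ n) : 
    (Finset.univ.filter (fun i : Fin n => i.val < k)).card = k := by
  have := Fin.card_filter_val_lt (n := n) (m := k)
  simpa [hk] using this

lemma cyc_card (n k : ℕ) [NeZero n] (hk : k ≤ n) (j : Fin n) : (cyc n k j).card = k := by
  refine Eq.trans ?_ (card_lt_fin n k hk)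
  refine Finset.card_bij (fun i _ => i - j) ?_ ?_ ?_
  · intro i hi; simpa [cyc] using hi
  · intro a _ b _ h; exact sub_left_injective h
  · intro b hb; exact ⟨b + j, by simpa [cyc] using hb, by simp⟩

lemma cyc_cover (n k : ℕ) [NeZero n] (hk : k ≤ n) (i : Fin n) : 
    (Finset.univ.filter (fun j => i ∈ cyc n k j)).card = k := by
  refine Eq.trans ?_ (card_lt_fin n k hk)
  refine Finset.card_bij (fun j _ => i - j) ?_ ?_ ?_
  · intro j hj; simpa [cyc] using hj
  · intro a _ b _ h; exact sub_right_injective h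
  · intro b hb; exact ⟨i - b, by simpa [cyc] using hb, by simp⟩

lemma rs_main {n : ℕ} {f : Eucl n → ℝ} (hf : MemQ0 f) (V : (Fin n → ℝ) ≃ₗ[ℝ] Eucl n)
    (S : Finset (Fin n)) (p : Fin n → ℝ) (t δ v : ℝ) (ht0 : 0 < t) (ht1 : t < 1) (hδ : 0 < δ) (hv : 0 < v)
    (hbox : ∀ w : Fin n → ℝ, (∀ i ∈ S, w i = 0) → (∀ i ∉ S, 0 ≤ w i ∧ w i ≤ δ) → v ≤ f (V (p + w))) :
    ENNReal.ofReal ((v / supNorm f) ^ t) * ENNReal.ofReal ((1-t)^S.card * (t*δ)^(n - S.card)) * 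
      ∫⁻ y : S → ℝ, ⨆ z, ENNReal.ofReal (f (V (Function.updateFinset z S y))) ≤ 
      ∫⁻ x, ENNReal.ofReal (f (V x)) := by
  have hM := q0_sup_pos hf
  have hVm : Measurable V := V.toLinearMap.continuous_of_finiteDimensional.measurable
  refine rs_step S (fun x => ENNReal.ofReal (f (V x))) 
    ((hf.2.2.1.measurable.comp hVm).ennreal_ofReal) p t δ ht0 ht1 hδ _ ENNReal.ofReal_ne_top ?_
  intro x w hw hw'
  rw [← ENNReal.ofReal_mul (by positivity)]
  refine ENNReal.ofReal_le_ofReal ?_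
  have hq := hbox w hw hw'
  have hlc := hf.2.1 (V x) (V (p + w)) (1 - t) (by linarith) (by linarith)
  have e : (1 - t) • V x + (1 - (1 - t)) • V (p + w) = V ((1 - t) • x + t • (p + w)) := by
    rw [map_add V ((1 - t) • x), map_smul, map_smul]; congr 2; ring
  rw [e, show 1 - (1 - t) = t by ring] at hlc
  refine le_trans ?_ hlc
  rcases (hf.1 (V x)).eq_or_lt with h0 | h0
  · rw [← h0, mul_zero]; 
    have := hf.1 (V (p + w))
    positivity
  have hle := q0_le_sup hf (V x)
  have h1 : v ^ t ≤ f (V (p + w)) ^ t := Real.rpow_le_rpow hv.le hq ht0.le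
  have h2 : f (V x) ^ t ≤ supNorm f ^ t := Real.rpow_le_rpow h0.le hle ht0.le
  have h3 : f (V x) = f (V x) ^ (1 - t) * f (V x) ^ t := by
    rw [← Real.rpow_add h0]; simp
  rw [Real.div_rpow hv.le hM.le]
  have hMt : 0 < supNorm f ^ t := by positivity
  calc v ^ t / supNorm f ^ t * f (V x) = v ^ t / supNorm f ^ t * (f (V x) ^ (1 - t) * f (V x) ^ t) := by rw [← h3]
    _ ≤ v ^ t / supNorm f ^ t * (f (V x) ^ (1 - t) * supNorm f ^ t) := by gcongr
    _ = f (V x) ^ (1 - t) * v ^ t := by field_simp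
    _ ≤ _ := by gcongr

lemma box_exists {n : ℕ} {f : Eucl n → ℝ} (hf : MemQ0 f) (V : (Fin n → ℝ) ≃ₗ[ℝ] Eucl n) :
    ∃ (p : Fin n → ℝ) (δ v : ℝ), 0 < δ ∧ 0 < v ∧ ∀ w : Fin n → ℝ, (∀ i, |w i| ≤ δ) → v ≤ f (V (p + w)) := by
  obtain ⟨v, R, hv, -, hvol⟩ := lev_exists hf
  have hconv := lev_convex hf v R
  have hne : (interior (lev f v R)).Nonempty := by
    by_contra hemp
    rw [Set.not_nonempty_iff_eq_empty] at hemp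
    have h1 := hconv.addHaar_frontier (volume : Measure (Fin n → ℝ))
    rw [frontier, hemp, Set.sdiff_empty] at h1
    have h2 : volume (lev f v R) = 0 := measure_mono_null subset_closure h1
    rw [h2] at hvol
    exact not_lt_bot hvol
  let W : (Fin n → ℝ) →ₗ[ℝ] (Fin n → ℝ) := (WithLp.linearEquiv 2 ℝ (Fin n → ℝ)).toLinearMap ∘ₗ V.toLinearMap
  have hW : ∀ x, WithLp.toLp 2 (W x) = V x := fun x => rfl
  have hWc : Continuous W := W.continuous_of_finiteDimensional
  have hop : IsOpen (W ⁻¹' (interior (lev f v R))) := isOpen_interior.preimage hWc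
  obtain ⟨a, ha⟩ := hne
  have hp : W (V.symm (WithLp.toLp 2 a)) = a := by
    simp [W]
  obtain ⟨ε, hε, hball⟩ := Metric.isOpen_iff.mp hop (V.symm (WithLp.toLp 2 a)) (by rw [Set.mem_preimage, hp]; exact ha)
  refine ⟨V.symm (WithLp.toLp 2 a), ε / 2, v, by positivity, hv, fun w hw => ?_⟩
  have hmem : V.symm (WithLp.toLp 2 a) + w ∈ Metric.ball (V.symm (WithLp.toLp 2 a)) ε := by
    rw [Metric.mem_ball, dist_self_add_left]
    refine lt_of_le_of_lt ((pi_norm_le_iff_of_nonneg (by positivity)).mpr (fun i => ?_)) (half_lt_self hε)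
    exact hw i
  have := interior_subset (hball hmem)
  exact this.1

lemma lint_V {n : ℕ} (A : Matrix (Fin n) (Fin n) ℝ) (hA : A.det ≠ 0) (V : (Fin n → ℝ) ≃ₗ[ℝ] Eucl n)
    (hV : ∀ x, V x = WithLp.toLp 2 (A.mulVec x)) (g : Eucl n → ℝ≥0∞) (hg : Measurable g) : 
    ∫⁻ x, g (V x) = ENNReal.ofReal (|A.det|⁻¹) * ∫⁻ x, g x := by
  have hmap := Real.map_matrix_volume_pi_eq_smul_volume_pi hA
  have hm : Measurable (Matrix.toLin' A) := (Matrix.toLin' A).continuous_of_finiteDimensional.measurable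
  have hg' : Measurable (fun x : Fin n → ℝ => g (WithLp.toLp 2 x)) := 
    hg.comp (PiLp.volume_preserving_toLp (Fin n)).measurable
  have h1 : ∫⁻ x, g (V x) = ∫⁻ y : Fin n → ℝ, g (WithLp.toLp 2 y) ∂(Measure.map (Matrix.toLin' A) volume) := by
    rw [lintegral_map hg' hm]
    refine lintegral_congr fun x => ?_
    rw [hV]; rfl
  rw [h1, hmap, lintegral_smul_measure, abs_inv, smul_eq_mul]
  congr 1
  exact (PiLp.volume_preserving_toLp (Fin n)).lintegral_comp hg

lemma proj_fin {n : ℕ} {f : Eucl n → ℝ} (hf : MemQ0 f) (V : (Fin n → ℝ) ≃ₗ[ℝ] Eucl n)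
    (S : Finset (Fin n)) (hfin : ∫⁻ x, ENNReal.ofReal (f (V x)) ≠ ⊤) : 
    ∫⁻ y : S → ℝ, ⨆ z, ENNReal.ofReal (f (V (Function.updateFinset z S y))) ≠ ⊤ := by
  obtain ⟨p, δ, v, hδ, hv, hbox⟩ := box_exists hf V
  have hM := q0_sup_pos hf
  have := rs_main hf V S p (1/2) δ v (by norm_num) (by norm_num) hδ hv ?_
  · intro htop
    rw [htop, ENNReal.mul_top] at this
    · exact hfin (top_le_iff.mp this)
    · have h1 : 0 < (v / supNorm f) ^ (1/2 : ℝ) := by positivity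
      have h2 : (0:ℝ) < (1 - 1/2) ^ S.card * (1/2 * δ) ^ (n - S.card) := by
        have : (0:ℝ) < 1 - 1/2 := by norm_num
        positivity
      exact mul_ne_zero (by simpa using h1) (by simpa using h2)
  · intro w h1 h2
    refine hbox w fun i => ?_
    by_cases hi : i ∈ S
    · rw [h1 i hi]; simpa using hδ.le
    · rw [abs_of_nonneg (h2 i hi).1]; exact (h2 i hi).2

lemma proj_le {n : ℕ} (k : ℕ) {f₁ f₂ : Eucl n → ℝ} (hf₁ : MemQ0 f₁) (hf₂ : MemQ0 f₂) 
    (hcond : ∀ H : Submodule ℝ (Eucl n), Module.finrank ℝ H = k → projL1 f₁ H ≤ projL1 f₂ H)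
    (V : (Fin n → ℝ) ≃ₗ[ℝ] Eucl n) (S : Finset (Fin n)) (hS : S.card = k) 
    (hfin : ∫⁻ x, ENNReal.ofReal (f₁ (V x)) ≠ ⊤) : 
    ∫⁻ y : S → ℝ, ⨆ z, ENNReal.ofReal (f₁ (V (Function.updateFinset z S y))) ≤
    ∫⁻ y : S → ℝ, ⨆ z, ENNReal.ofReal (f₂ (V (Function.updateFinset z S y))) := by
  have h1 := proj_fin hf₁ V S hfin
  obtain ⟨H, hH, c, hc0, hct, h⟩ := proj_lin V S
  rw [h (fun x => ENNReal.ofReal (f₁ x))] at h1 ⊢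
  rw [h (fun x => ENNReal.ofReal (f₂ x))]
  have hc := hcond H (hH.trans hS)
  rw [projL1_eq hf₁, projL1_eq hf₂] at hc
  have hX : ∫⁻ y : H, ⨆ z : Hᗮ, ENNReal.ofReal (f₁ ((y : Eucl n) + (z : Eucl n))) ≠ ⊤ := by
    intro ht
    rw [ht, ENNReal.mul_top hc0] at h1
    exact h1 rfl
  refine mul_le_mul_right ?_ c
  by_cases hY : ∫⁻ y : H, ⨆ z : Hᗮ, ENNReal.ofReal (f₂ ((y : Eucl n) + (z : Eucl n))) = ⊤
  · rw [hY]; exact le_top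
  · exact (ENNReal.toReal_le_toReal hX hY).mp hc

lemma box_main {n : ℕ} {K : Set (Fin n → ℝ)} (hK : Convex ℝ K) (x x' : Fin n → (Fin n → ℝ))
    (hx : ∀ i, x i ∈ K) (hx' : ∀ i, x' i ∈ K) (S : Finset (Fin n)) (m : ℕ) (hm : 1 ≤ m)
    (hS : Sᶜ.card = m) (w : Fin n → ℝ) (hw : ∀ i ∈ S, w i = 0) 
    (hw' : ∀ i ∉ S, 0 ≤ w i ∧ w i ≤ 1 / (m : ℝ)) : 
    (∑ i ∈ Sᶜ, (1 / (m : ℝ)) • x' i) + (Matrix.of (fun j i => x i j - x' i j)).mulVec w ∈ K := by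
  have hm0 : (0 : ℝ) < m := by positivity
  have e : (∑ i ∈ Sᶜ, (1 / (m : ℝ)) • x' i) + (Matrix.of (fun j i => x i j - x' i j)).mulVec w = 
      ∑ i ∈ Sᶜ, (1 / (m : ℝ)) • ((1 - m * w i) • x' i + (m * w i) • x i) := by
    have e1 : (Matrix.of (fun j i => x i j - x' i j)).mulVec w = ∑ i ∈ Sᶜ, w i • (x i - x' i) := by
      have : ∑ i ∈ Sᶜ, w i • (x i - x' i) = ∑ i, w i • (x i - x' i) := by
        refine Finset.sum_subset (Finset.subset_univ _) fun i _ hi => ?_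
        rw [hw i (by simpa using hi), zero_smul]
      rw [this]
      ext j
      simp [Matrix.mulVec, dotProduct, mul_comm]
    rw [e1, ← Finset.sum_add_distrib]
    refine Finset.sum_congr rfl fun i _ => ?_
    ext j
    simp
    field_simp
    ring
  rw [e]
  refine hK.sum_mem (fun i _ => by positivity) ?_ fun i hi => ?_
  · rw [Finset.sum_const, hS, nsmul_eq_mul]; field_simp
  · obtain ⟨h1, h2⟩ := hw' i (by simpa using hi)
    have h3 : m * w i ≤ 1 := by
      rw [le_div_iff₀ hm0] at h2; linarith
    exact hK (hx' i) (hx i) (by linarith) (by positivity) (by ring)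

end FShep

open FShep

theorem functional_shephard (n k : ℕ) (hn : 2 ≤ n) (hk1 : 1 ≤ k) (hk2 : k ≤ n - 1)
    (f₁ f₂ : Eucl n → ℝ) (hf₁ : MemQ0 f₁) (hf₂ : MemQ0 f₂)
    (hcond : ∀ H : Submodule ℝ (Eucl n), Module.finrank ℝ H = k →
      projL1 f₁ H ≤ projL1 f₂ H) :
    lpNorm ((n : ℝ) / k) f₁ ≤
      (16 * Real.sqrt n) ^ (n - k) * (∫ x, f₂ x) ^ ((k : ℝ) / n) *
        supNorm f₂ ^ (((n : ℝ) - k) / n) := by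
  obtain ⟨m, hkm⟩ : ∃ m, k + m = n := ⟨n - k, by omega⟩
  have hm : 1 ≤ m := by omega
  have hnk : n - k = m := by omega
  have hnk' : (n : ℝ) - k = m := by rw [← hkm]; push_cast; ring
  rw [hnk, hnk']
  have : NeZero n := ⟨by omega⟩
  have hn0 : (0 : ℝ) < n := by positivity
  have hk0 : (0 : ℝ) < k := by positivity
  have hm0 : (0 : ℝ) < m := by positivity
  have hM := q0_sup_pos hf₂
  have hI := hf₂.2.2.2.2
  obtain ⟨v, R, hv, hvM, hvol⟩ := lev_exists hf₂
  have hK0 : volume (lev f₂ v R) ≠ 0 := (pos_of_gt hvol).ne'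
  have hKR : lev f₂ v R ⊆ Metric.closedBall 0 R := Set.inter_subset_right
  have hKt : volume (lev f₂ v R) ≠ ⊤ :=
    ((measure_mono hKR).trans_lt (isCompact_closedBall _ _).measure_lt_top).ne
  obtain ⟨x, x', hx, hx', hsel⟩ := selection (lev_meas hf₂ v R) hKR hK0
  set A : Matrix (Fin n) (Fin n) ℝ := Matrix.of (fun j i => x i j - x' i j) with hA
  have hκ := (ENNReal.ofReal_le_iff_le_toReal hKt).mp hvol.le
  have hκ0 : 0 < (volume (lev f₂ v R)).toReal := ENNReal.toReal_pos hK0 hKt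
  have hdet : A.det ≠ 0 := by
    intro h0
    rw [h0] at hsel
    have h1 : (0 : ℝ) < n.factorial := by exact_mod_cast n.factorial_pos
    have : 0 < n.factorial * 2 ^ n * (volume (lev f₂ v R)).toReal ^ 2 := by positivity
    norm_num at hsel
    linarith
  set d := |A.det| with hd
  have hd0 : 0 < d := abs_pos.mpr hdet
  rw [← sq_abs A.det] at hsel
  have hreal := final_real n k m hn hk1 hm hkm _ _ v _ d hI hM hv hκ0.le hd0 hκ hsel
  set I := ∫ x, f₂ x with hIdef
  set M := supNorm f₂ with hMdef
  set t : ℝ := (m : ℝ) / (2 * n) with ht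
  set E : ℝ := (v / M) ^ t * ((1 - t) ^ k * (1 / (2 * n)) ^ m) with hE
  have ht0 : 0 < t := by positivity
  have ht1 : t < 1 := by
    rw [ht, div_lt_one (by positivity)]; linarith
  have hE0 : 0 < E := by
    have : 0 < 1 - t := by linarith
    positivity
  let V : (Fin n → ℝ) ≃ₗ[ℝ] Eucl n := 
    (LinearMap.GeneralLinearGroup.generalLinearEquiv ℝ _ (Matrix.GeneralLinearGroup.toLin 
      (Matrix.GeneralLinearGroup.mkOfDetNeZero A hdet))).trans (WithLp.linearEquiv 2 ℝ (Fin n → ℝ)).symm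
  have hV : ∀ y, V y = WithLp.toLp 2 (A.mulVec y) := fun y => rfl
  have hfin1 : ∫⁻ x, ENNReal.ofReal (f₁ (V x)) ≠ ⊤ := by
    rw [lint_V A hdet V hV (fun x => ENNReal.ofReal (f₁ x)) hf₁.2.2.1.measurable.ennreal_ofReal, q0_lintegral hf₁]
    exact ENNReal.mul_ne_top ENNReal.ofReal_ne_top ENNReal.ofReal_ne_top
  have hint2 : ∫⁻ x, ENNReal.ofReal (f₂ (V x)) = ENNReal.ofReal (d⁻¹ * I) := by
    rw [lint_V A hdet V hV (fun x => ENNReal.ofReal (f₂ x)) hf₂.2.2.1.measurable.ennreal_ofReal, q0_lintegral hf₂,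
      ENNReal.ofReal_mul (by positivity)]
  set T : ℝ := d⁻¹ * I / E with hT
  have hT0 : 0 ≤ T := by positivity
  have hproj : ∀ j, ∫⁻ y : (cyc n k j) → ℝ, ⨆ z, ENNReal.ofReal (f₁ (V (Function.updateFinset z (cyc n k j) y))) 
      ≤ ENNReal.ofReal T := by
    intro j
    have hc : (cyc n k j).card = k := cyc_card n k (by omega) j
    have hcc : (cyc n k j)ᶜ.card = m := by
      rw [Finset.card_compl, hc, Fintype.card_fin]; omega
    have hp := proj_le k hf₁ hf₂ hcond V (cyc n k j) hc hfin1
    refine hp.trans ?_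
    have hr := rs_main hf₂ V (cyc n k j) 
      (V.symm (WithLp.toLp 2 (∑ i ∈ (cyc n k j)ᶜ, (1 / (m : ℝ)) • x' i))) t (1 / m) v ht0 ht1 (by positivity) hv ?_
    · have e : t * (1 / (m : ℝ)) = 1 / (2 * n) := by rw [ht]; field_simp
      rw [hc, hnk, e, ← ENNReal.ofReal_mul (by positivity), hint2] at hr
      rw [hT, ENNReal.ofReal_div_of_pos hE0, ENNReal.le_div_iff_mul_le 
        (Or.inl (by simpa using hE0)) (Or.inl ENNReal.ofReal_ne_top), mul_comm]
      exact hr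
    · intro w hw hw'
      have := box_main (lev_convex hf₂ v R) x x' hx hx' (cyc n k j) m hm hcc w hw hw'
      have h2 := this.1
      simp only [Set.mem_ofPred_eq] at h2
      rw [map_add, LinearEquiv.apply_symm_apply, hV]
      exact h2
  have hlw := loomis_whitney (cyc n k) (1 / (k : ℝ)) (by positivity) ?_ 
    (fun x => ENNReal.ofReal (f₁ (V x))) 
    (fun j y => ⨆ z, ENNReal.ofReal (f₁ (V (Function.updateFinset z (cyc n k j) y)))) ?_ ?_
  rotate_left
  · intro i
    rw [Finset.sum_const, cyc_cover n k (by omega), nsmul_eq_mul]; field_simp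
  · intro j
    refine aem_of_convex _ _ (proj_convex hf₁.1 hf₁.2.1 
      (fun y z => V (Function.updateFinset z (cyc n k j) y)) ?_)
    intro y y' z z' a b
    rw [← map_smul, ← map_smul, ← map_add]
    congr 1
    funext i
    by_cases hi : i ∈ cyc n k j <;> simp [Function.updateFinset, hi]
  · intro j y
    refine le_trans (le_of_eq ?_) (le_iSup _ y)
    congr 3
    funext i
    by_cases hi : i ∈ cyc n k j <;> simp [Function.updateFinset, hi]
  set q : ℝ := (n : ℝ) / k with hq
  have hq0 : 0 < q := by positivity
  have hJ : ∫⁻ x, ENNReal.ofReal (f₁ x ^ q) ≤ ENNReal.ofReal (d * T ^ q) := by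
    have h1 : ENNReal.ofReal d⁻¹ * ∫⁻ x, ENNReal.ofReal (f₁ x ^ q) ≤ ENNReal.ofReal (T ^ q) := by
      have hmeas : Measurable (fun x => ENNReal.ofReal (f₁ x ^ q)) := 
        (hf₁.2.2.1.measurable.pow_const q).ennreal_ofReal
      rw [← lint_V A hdet V hV (fun x => ENNReal.ofReal (f₁ x ^ q)) hmeas]
      calc ∫⁻ x, ENNReal.ofReal (f₁ (V x) ^ q) 
          = ∫⁻ x, ENNReal.ofReal (f₁ (V x)) ^ ((Fintype.card (Fin n) : ℝ) * (1 / k)) := by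
            refine lintegral_congr fun x => ?_
            rw [Fintype.card_fin, mul_one_div, ENNReal.ofReal_rpow_of_nonneg (hf₁.1 _) hq0.le]
        _ ≤ ∏ j, (∫⁻ y : (cyc n k j) → ℝ, ⨆ z, ENNReal.ofReal (f₁ (V (Function.updateFinset z (cyc n k j) y)))) ^ (1 / (k : ℝ)) := hlw
        _ ≤ ∏ j : Fin n, (ENNReal.ofReal T) ^ (1 / (k : ℝ)) := by
            refine Finset.prod_le_prod' fun j _ => ENNReal.rpow_le_rpow (hproj j) (by positivity)
        _ = ENNReal.ofReal (T ^ q) := by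
            rw [Finset.prod_const, Finset.card_univ, Fintype.card_fin, ← ENNReal.rpow_natCast, ← ENNReal.rpow_mul, 
              ENNReal.ofReal_rpow_of_nonneg hT0 (by positivity)]
            congr 2
            rw [hq]; field_simp
    calc ∫⁻ x, ENNReal.ofReal (f₁ x ^ q) = ENNReal.ofReal d * (ENNReal.ofReal d⁻¹ * ∫⁻ x, ENNReal.ofReal (f₁ x ^ q)) := by
          rw [← mul_assoc, ← ENNReal.ofReal_mul hd0.le, mul_inv_cancel₀ hd0.ne', ENNReal.ofReal_one, one_mul]
      _ ≤ ENNReal.ofReal d * ENNReal.ofReal (T ^ q) := mul_le_mul_right h1 _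
      _ = _ := by rw [ENNReal.ofReal_mul hd0.le]
  have hJr : ∫ x, f₁ x ^ q ≤ d * T ^ q := by
    rw [integral_eq_lintegral_of_nonneg_ae (Filter.Eventually.of_forall fun x => Real.rpow_nonneg (hf₁.1 x) q) 
      (hf₁.2.2.1.measurable.pow_const q).aestronglyMeasurable]
    exact ENNReal.toReal_le_of_le_ofReal (by positivity) hJ
  have hfinal : lpNorm q f₁ ≤ d ^ ((k : ℝ) / n) * T := by
    unfold _root_.lpNorm
    refine (Real.rpow_le_rpow (integral_nonneg fun x => Real.rpow_nonneg (hf₁.1 x) q) hJr (by positivity)).trans_eq ?_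
    rw [Real.mul_rpow hd0.le (by positivity), ← Real.rpow_mul hT0, mul_one_div_cancel hq0.ne', Real.rpow_one, hq, one_div_div]
  refine hfinal.trans ?_
  have e : d ^ ((k : ℝ) / n) * T = I * d ^ (-((m : ℝ) / n)) / E := by
    have h1 : -((m : ℝ) / n) = (k : ℝ) / n - 1 := by
      rw [← hnk']; field_simp; ring
    rw [h1, Real.rpow_sub hd0, Real.rpow_one, hT]
    field_simp
  rw [e, div_le_iff₀ hE0]
  exact hreal
end
end
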